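/- arXiv:1905.02160 — 4 statements merged into one kernel-verified Lean document; each statement's English description precedes it below -/
import Mathlib

section
/- For every k, r ∈ ℕ with k, r ≥ 1 and every Souslin measurable colouring c : FIN_{±k}^[∞] → {0, …, r−1} (with respect to the metrizable topology on FIN_{±k}^[∞]), there exist i < r and an infinite block sequence P ∈ FIN_{±k}^[∞] such that ⟨P⟩_{±k}^[∞] ⊆ (c⁻¹{i})₁. -/
open Function Set

/-- `p` is an element of `FIN_{±k}`: finitely supported, values in `{0, ±1, …, ±k}`,
attaining one of the values `±k`. -/
def IsFin (k : ℕ) (p : ℕ → ℤ) : Prop :=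
  (Function.support p).Finite ∧ (∀ n, |p n| ≤ (k : ℤ)) ∧ (∃ n, |p n| = (k : ℤ))

/-- `p < q` in the block ordering: every point of `supp p` precedes every point of `supp q`. -/
def BlockLt (p q : ℕ → ℤ) : Prop :=
  ∀ m n : ℕ, p m ≠ 0 → q n ≠ 0 → m < n

/-- The tetris operation `T`. -/
def tetris (p : ℕ → ℤ) : ℕ → ℤ := fun n =>
  if 0 < p n then p n - 1 else if p n < 0 then p n + 1 else 0

/-- The sign-flipped tetris operation `-T`. -/
def negT (p : ℕ → ℤ) : ℕ → ℤ := -(tetris p)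

/-- The weak tetris operation `S`. -/
def Sop (p : ℕ → ℤ) : ℕ → ℤ := fun n => if |p n| = 1 then 0 else p n

/-- `‖p‖ ≤ c` for the `ℓ∞` norm. -/
def normLe (p : ℕ → ℤ) (c : ℕ) : Prop := ∀ n, |p n| ≤ (c : ℤ)

/-- `(A)_c`, the `c`-fattening of `A`. -/
def approx (c : ℕ) (A : Set (ℕ → ℤ)) : Set (ℕ → ℤ) :=
  {p | ∃ q ∈ A, normLe (p - q) c}

/-- `P` is an infinite block sequence in `FIN_{±k}`. -/
def IsBlockSeq (k : ℕ) (P : ℕ → ℕ → ℤ) : Prop :=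
  (∀ n, IsFin k (P n)) ∧ ∀ m n : ℕ, m < n → BlockLt (P m) (P n)

/-- `t` is a finite block sequence in `FIN_{±k}` (coded as a list). -/
def IsFinBlockSeq (k : ℕ) (t : List (ℕ → ℤ)) : Prop :=
  (∀ p ∈ t, IsFin k p) ∧ t.Pairwise BlockLt

/-- `q ∈ ⟨P⟩_{±k}`: `q = ε₀T^{j₀}(p_{n₀}) + ⋯ + ε_m T^{j_m}(p_{n_m})` with `n₀ < ⋯ < n_m`,
`εᵢ ∈ {±1}`, `jᵢ < k` and `min jᵢ = 0`. -/
def InSpanPM (k : ℕ) (P : ℕ → ℕ → ℤ) (q : ℕ → ℤ) : Prop :=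
  ∃ (m : ℕ) (n : Fin (m + 1) → ℕ) (ε : Fin (m + 1) → ℤ) (j : Fin (m + 1) → ℕ),
    StrictMono n ∧ (∀ i, ε i = 1 ∨ ε i = -1) ∧ (∀ i, j i < k) ∧ (∃ i, j i = 0) ∧
    q = ∑ i, ε i • tetris^[j i] (P (n i))

/-- `q ∈ ⟨P⟩_{(−T)}`. -/
def InSpanNegT (k : ℕ) (P : ℕ → ℕ → ℤ) (q : ℕ → ℤ) : Prop :=
  ∃ (m : ℕ) (n : Fin (m + 1) → ℕ) (j : Fin (m + 1) → ℕ),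
    StrictMono n ∧ (∀ i, j i < k) ∧ (∃ i, j i = 0) ∧
    q = ∑ i, negT^[j i] (P (n i))

/-- `q ∈ ⟨p_a, …, p_b⟩_{(−T)}`. -/
def InSpanNegTRange (k : ℕ) (P : ℕ → ℕ → ℤ) (a b : ℕ) (q : ℕ → ℤ) : Prop :=
  ∃ (m : ℕ) (n : Fin (m + 1) → ℕ) (j : Fin (m + 1) → ℕ),
    StrictMono n ∧ (∀ i, a ≤ n i ∧ n i ≤ b) ∧ (∀ i, j i < k) ∧ (∃ i, j i = 0) ∧
    q = ∑ i, negT^[j i] (P (n i))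

/-- A cofinite ultrafilter on `FIN_{±k}` (coded as an ultrafilter on `ℕ → ℤ`
concentrating on `FIN_{±k}`). -/
def IsCofiniteUF (k : ℕ) (𝒰 : Ultrafilter (ℕ → ℤ)) : Prop :=
  {p | IsFin k p} ∈ 𝒰 ∧ ∀ m : ℕ, {p : ℕ → ℤ | ∀ n < m, p n = 0} ∈ 𝒰

/-- `A ∈ 𝒰 + 𝒱`. -/
def SumMem (𝒰 𝒱 : Ultrafilter (ℕ → ℤ)) (A : Set (ℕ → ℤ)) : Prop :=
  {p | {q | BlockLt p q ∧ p + q ∈ A} ∈ 𝒱} ∈ 𝒰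

/-- `𝒰` is subsymmetric: `A ∈ 𝒰` implies `−(A)₁ ∈ 𝒰`. -/
def IsSubsymmetric (𝒰 : Ultrafilter (ℕ → ℤ)) : Prop :=
  ∀ A ∈ 𝒰, {p : ℕ → ℤ | -p ∈ approx 1 A} ∈ 𝒰

/-- `𝒰 + (−T)^j 𝒰 = (−T)^j 𝒰 + 𝒰 = 𝒰` for all `j ≤ k`. -/
def IsIdempotentUF (k : ℕ) (𝒰 : Ultrafilter (ℕ → ℤ)) : Prop :=
  ∀ j ≤ k, ∀ A : Set (ℕ → ℤ),
    (SumMem 𝒰 (Ultrafilter.map (negT^[j]) 𝒰) A ↔ A ∈ 𝒰) ∧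
    (SumMem (Ultrafilter.map (negT^[j]) 𝒰) 𝒰 A ↔ A ∈ 𝒰)

/-- A cofinite subsymmetric ultrafilter on `FIN_{±k}` idempotent with respect to
all the maps `(−T)^j`, `j ≤ k`. -/
def IsGowersUF (k : ℕ) (𝒰 : Ultrafilter (ℕ → ℤ)) : Prop :=
  IsCofiniteUF k 𝒰 ∧ IsSubsymmetric 𝒰 ∧ IsIdempotentUF k 𝒰

/-- A `𝒰`-tree on `FIN_{±k}` with stem `s`. -/
structure IsUTree (k : ℕ) (𝒰 : Ultrafilter (ℕ → ℤ)) (U : Set (List (ℕ → ℤ)))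
    (s : List (ℕ → ℤ)) : Prop where
  blocks : ∀ t ∈ U, IsFinBlockSeq k t
  prefixClosed : ∀ t ∈ U, ∀ t' : List (ℕ → ℤ), t' <+: t → t' ∈ U
  stemMem : s ∈ U
  stemComparable : ∀ t ∈ U, s <+: t ∨ t <+: s
  branch : ∀ t ∈ U, s <+: t → {p | t ++ [p] ∈ U} ∈ 𝒰

/-- `[U]`, the set of infinite branches of a tree of finite block sequences. -/
def Branches (U : Set (List (ℕ → ℤ))) : Set (ℕ → ℕ → ℤ) :=
  {P | ∀ n : ℕ, (List.ofFn fun i : Fin n => P i.1) ∈ U}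

/-- The space `FIN_{±k}^[∞]` of infinite block sequences. -/
def BlockSeq (k : ℕ) : Type := {P : ℕ → ℕ → ℤ // IsBlockSeq k P}

/-- The metrizable topology on `FIN_{±k}^[∞]`, generated by the basic sets `[s]`. -/
instance BlockSeq.topology (k : ℕ) : TopologicalSpace (BlockSeq k) :=
  TopologicalSpace.generateFrom
    {O | ∃ s : List (ℕ → ℤ),
      O = {P : BlockSeq k | ∀ i : Fin s.length, P.1 i.1 = s.get i}}

/-- The Souslin operation applied to a Souslin scheme. -/
def SouslinOp {α : Type*} (F : List ℕ → Set α) : Set α :=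
  ⋃ x : ℕ → ℕ, ⋂ n : ℕ, F (List.ofFn fun i : Fin n => x i.1)

/-- `A` is Souslin measurable: it belongs to every field of sets containing the open
sets and closed under the Souslin operation. -/
def SouslinMeasurable {α : Type*} [TopologicalSpace α] (A : Set α) : Prop :=
  ∀ 𝓕 : Set (Set α),
    (∀ O : Set α, IsOpen O → O ∈ 𝓕) →
    (∀ B ∈ 𝓕, Bᶜ ∈ 𝓕) →
    (∀ B ∈ 𝓕, ∀ C ∈ 𝓕, B ∪ C ∈ 𝓕) →
    (∀ F : List ℕ → Set α, (∀ s, F s ∈ 𝓕) → SouslinOp F ∈ 𝓕) →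
    A ∈ 𝓕

/-- The map `Φ_m : FIN_{±2m} → FIN_{±m}` (its defining formula does not depend on `m`). -/
def Phi (p : ℕ → ℤ) : ℕ → ℤ := fun n =>
  if p n % 2 = 0 then p n / 2
  else if 0 < p n then (p n - 1) / 2
  else (p n + 1) / 2

/-- `Ψ = Φ_k ∘ Φ_{2k} : FIN_{±4k} → FIN_{±k}`. -/
def Psi (p : ℕ → ℤ) : ℕ → ℤ := Phi (Phi p)

section UltraRamsey

variable {X α : Type*}

/-- The list of the first `n` entries. -/
def pre (ι : X → ℕ → α) (x : X) (n : ℕ) : List α := List.ofFn fun i : Fin n => ι x i.1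

/-- Branches with stem `s` of the tree given by the successor sets `A`. -/
def Br (ι : X → ℕ → α) (s : List α) (A : List α → Set α) : Set X :=
  {x | pre ι x s.length = s ∧ ∀ n, s.length ≤ n → ι x n ∈ A (pre ι x n)}

/-- The node `s` rejects `Y`. -/
def Rej (ι : X → ℕ → α) (𝒰 : Ultrafilter α) (Y : Set X) (s : List α) : Prop :=
  ∃ A : List α → Set α, (∀ u, A u ∈ 𝒰) ∧ ∀ x ∈ Br ι s A, x ∉ Y

/-- `Y` is `𝒰`-Ramsey. -/
def URamsey (ι : X → ℕ → α) (𝒰 : Ultrafilter α) (Y : Set X) : Prop :=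
  ∀ s, Rej ι 𝒰 Y s ∨ Rej ι 𝒰 Yᶜ s

variable {ι : X → ℕ → α} {𝒰 : Ultrafilter α}

@[simp] lemma pre_length (x : X) (n : ℕ) : (pre ι x n).length = n := by simp [pre]

lemma pre_succ (x : X) (n : ℕ) : pre ι x (n + 1) = pre ι x n ++ [ι x n] := by
  rw [pre, List.ofFn_succ_last]
  rfl

lemma pre_mono_le (x : X) {m n : ℕ} (h : m ≤ n) : pre ι x m <+: pre ι x n := by
  induction n, h using Nat.le_induction with
  | base => exact List.prefix_rfl
  | succ n _ ih => rw [pre_succ]; exact ih.trans (List.prefix_append _ _)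

lemma Br.mono {s : List α} {A B : List α → Set α} (h : ∀ u, A u ⊆ B u) : Br ι s A ⊆ Br ι s B :=
  fun _ hx => ⟨hx.1, fun n hn => h _ (hx.2 n hn)⟩

lemma Br.up {s : List α} {A : List α → Set α} {x : X} (hx : x ∈ Br ι s A) {n : ℕ}
    (hn : s.length ≤ n) : x ∈ Br ι (pre ι x n) A :=
  ⟨by simp, fun m hm => hx.2 m (hn.trans (by simpa using hm))⟩

lemma fuse (W : List α → List α → Set α) (hW : ∀ t u, W t u ∈ 𝒰) :
    ∃ A : List α → Set α, (∀ u, A u ∈ 𝒰) ∧ ∀ s, ∀ x ∈ Br ι s A, ∀ n, s.length ≤ n →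
      x ∈ Br ι (pre ι x n) (W (pre ι x n)) := by
  refine ⟨fun u => ⋂ t ∈ {t | t <+: u}, W t u, fun u => ?_, ?_⟩
  · have hfin : {t | t <+: u}.Finite := by
      have : {t | t <+: u} = {t | t ∈ u.inits} := by ext; simp
      rw [this]; exact List.finite_toSet _
    exact (Filter.biInter_mem hfin).2 fun t _ => hW t u
  · intro s x hx n hn
    refine ⟨by simp, fun m hm => ?_⟩
    have hm : n ≤ m := by simpa using hm
    have := hx.2 m (hn.trans hm)
    simp only [mem_iInter] at this
    exact this _ (pre_mono_le x hm)

lemma Rej.mono {Y Z : Set X} {s : List α} (h : Rej ι 𝒰 Z s) (hYZ : Y ⊆ Z) : Rej ι 𝒰 Y s := by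
  obtain ⟨A, hA, h⟩ := h
  exact ⟨A, hA, fun x hx hy => h x hx (hYZ hy)⟩

lemma Rej.union {Y Z : Set X} {s : List α} (h : Rej ι 𝒰 Y s) (h' : Rej ι 𝒰 Z s) :
    Rej ι 𝒰 (Y ∪ Z) s := by
  obtain ⟨A, hA, h⟩ := h
  obtain ⟨B, hB, h'⟩ := h'
  refine ⟨fun u => A u ∩ B u, fun u => Filter.inter_mem (hA u) (hB u), fun x hx hy => ?_⟩
  rcases hy with hy | hy
  · exact h x (Br.mono (fun u => inter_subset_left) hx) hy
  · exact h' x (Br.mono (fun u => inter_subset_right) hx) hy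

open Classical in
/-- A choice of witnesses. -/
noncomputable def wit (ι : X → ℕ → α) (𝒰 : Ultrafilter α) (Y : Set X) (s u : List α) : Set α :=
  if h : Rej ι 𝒰 Y s then h.choose u else univ

lemma wit_mem (Y : Set X) (s u : List α) : wit ι 𝒰 Y s u ∈ 𝒰 := by
  unfold wit
  split_ifs with h
  · exact h.choose_spec.1 u
  · exact Filter.univ_mem

lemma wit_spec {Y : Set X} {s : List α} (h : Rej ι 𝒰 Y s) {x : X}
    (hx : x ∈ Br ι s (wit ι 𝒰 Y s)) : x ∉ Y := by
  have : wit ι 𝒰 Y s = h.choose := by ext1 u; simp [wit, h]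
  rw [this] at hx
  exact h.choose_spec.2 x hx

lemma Rej.of_succ {Y : Set X} {s : List α} (h : {a | Rej ι 𝒰 Y (s ++ [a])} ∈ 𝒰) :
    Rej ι 𝒰 Y s := by
  obtain ⟨A, hA, h'⟩ := fuse (ι := ι) (𝒰 := 𝒰) (wit ι 𝒰 Y) (wit_mem Y)
  have key : ∀ u, {a | u = s → Rej ι 𝒰 Y (s ++ [a])} ∈ 𝒰 := by
    intro u
    filter_upwards [h] with a ha _ using ha
  refine ⟨fun u => A u ∩ {a | u = s → Rej ι 𝒰 Y (s ++ [a])},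
    fun u => Filter.inter_mem (hA u) (key u), fun x hx => ?_⟩
  have h1 := h' s x (Br.mono (fun u => inter_subset_left) hx) (s.length + 1) (by omega)
  have h2 := (hx.2 s.length le_rfl).2 hx.1
  refine wit_spec ?_ h1
  rwa [pre_succ, hx.1]

lemma not_rej_tree {Y : Set X} {s : List α} (h : ¬ Rej ι 𝒰 Y s) :
    ∃ A : List α → Set α, (∀ u, A u ∈ 𝒰) ∧ ∀ x ∈ Br ι s A, ∀ n, s.length ≤ n →
      ¬ Rej ι 𝒰 Y (pre ι x n) := by
  refine ⟨fun u => {a | ¬ Rej ι 𝒰 Y u → ¬ Rej ι 𝒰 Y (u ++ [a])}, fun u => ?_, ?_⟩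
  · by_cases hu : Rej ι 𝒰 Y u
    · exact Filter.mem_of_superset Filter.univ_mem fun a _ h => absurd hu h
    · have : {a | Rej ι 𝒰 Y (u ++ [a])} ∉ 𝒰 := fun h => hu (Rej.of_succ h)
      rw [← Ultrafilter.compl_mem_iff_notMem] at this
      filter_upwards [this] with a ha _ using ha
  · intro x hx n hn
    induction n, hn using Nat.le_induction with
    | base => rwa [hx.1]
    | succ n hn ih => rw [pre_succ]; exact hx.2 n hn ih

lemma rej_tree {Y : Set X} {s : List α} (h : Rej ι 𝒰 Y s) :
    ∃ A : List α → Set α, (∀ u, A u ∈ 𝒰) ∧ ∀ x ∈ Br ι s A, ∀ n, s.length ≤ n →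
      Rej ι 𝒰 Y (pre ι x n) := by
  obtain ⟨A, hA, h⟩ := h
  refine ⟨A, hA, fun x hx n hn => ⟨A, hA, fun y hy => h y ?_⟩⟩
  have hpre : ∀ m, m ≤ n → pre ι y m = pre ι x m := by
    intro m hm
    have h1 : pre ι y n = pre ι x n := by simpa using hy.1
    have h2 := pre_mono_le (ι := ι) y hm
    rw [h1] at h2
    exact (List.prefix_of_prefix_length_le h2 (pre_mono_le x hm) (by simp)).eq_of_length (by simp)
  refine ⟨by rw [hpre _ hn, hx.1], fun m hm => ?_⟩
  rcases le_or_gt n m with hnm | hnm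
  · exact hy.2 m (by simpa using hnm)
  · have h1 := hpre (m + 1) hnm
    rw [pre_succ, pre_succ, hpre m hnm.le] at h1
    have h2 : ι y m = ι x m := by simpa using h1
    rw [hpre m hnm.le, h2]
    exact hx.2 m hm

lemma rej_iUnion {I : Type*} [Encodable I] (Y : I → Set X) {s : List α} {A : List α → Set α}
    (hA : ∀ u, A u ∈ 𝒰)
    (h : ∀ x ∈ Br ι s A, ∀ n, s.length ≤ n → ∀ i, Rej ι 𝒰 (Y i) (pre ι x n)) :
    Rej ι 𝒰 (⋃ i, Y i) s := by
  obtain ⟨B, hB, hB'⟩ := fuse (ι := ι) (𝒰 := 𝒰)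
    (fun t u => ⋂ i ∈ {i : I | Encodable.encode i ≤ t.length}, wit ι 𝒰 (Y i) t u) (by
      intro t u
      refine (Filter.biInter_mem ?_).2 fun i _ => wit_mem _ _ _
      exact (Set.finite_Iic t.length).preimage Encodable.encode_injective.injOn)
  refine ⟨fun u => A u ∩ B u, fun u => Filter.inter_mem (hA u) (hB u), fun x hx hy => ?_⟩
  obtain ⟨i, hi⟩ := mem_iUnion.1 hy
  have hxA := Br.mono (fun u => inter_subset_left) hx
  have hxB := Br.mono (fun u => inter_subset_right) hx
  have h1 := hB' s x hxB (max s.length (Encodable.encode i)) (le_max_left _ _)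
  have h2 := h x hxA (max s.length (Encodable.encode i)) (le_max_left _ _) i
  refine wit_spec h2 (Br.mono (fun u => ?_) h1) hi
  exact biInter_subset_of_mem (by simp)

lemma URamsey.compl {Y : Set X} (h : URamsey ι 𝒰 Y) : URamsey ι 𝒰 Yᶜ := by
  intro s
  rw [compl_compl]
  exact (h s).symm

lemma URamsey.union {Y Z : Set X} (h : URamsey ι 𝒰 Y) (h' : URamsey ι 𝒰 Z) :
    URamsey ι 𝒰 (Y ∪ Z) := by
  intro s
  rcases h s with h1 | h1
  · rcases h' s with h2 | h2
    · exact Or.inl (h1.union h2)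
    · exact Or.inr (h2.mono (compl_subset_compl.2 subset_union_right))
  · exact Or.inr (h1.mono (compl_subset_compl.2 subset_union_left))

lemma URamsey.of_open {Y : Set X}
    (hY : ∀ x ∈ Y, ∃ n, ∀ y, pre ι y n = pre ι x n → y ∈ Y) : URamsey ι 𝒰 Y := by
  intro s
  by_cases h : Rej ι 𝒰 Yᶜ s
  · exact Or.inr h
  left
  obtain ⟨A, hA, h'⟩ := not_rej_tree h
  refine ⟨A, hA, fun x hx hxY => ?_⟩
  obtain ⟨n, hn⟩ := hY x hxY
  refine h' x hx (max n s.length) (le_max_right _ _) ⟨fun _ => univ, fun _ => Filter.univ_mem, ?_⟩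
  intro y hy hyY
  apply hyY
  apply hn
  have h1 : pre ι y (max n s.length) = pre ι x (max n s.length) := by simpa using hy.1
  have h2 := pre_mono_le (ι := ι) y (le_max_left n s.length)
  rw [h1] at h2
  exact (List.prefix_of_prefix_length_le h2 (pre_mono_le x (le_max_left _ _))
    (by simp)).eq_of_length (by simp)

/-- Part of the Souslin operation below the node `s`. -/
def souslinBelow (F : List ℕ → Set X) (s : List ℕ) : Set X :=
  {x | ∃ z : ℕ → ℕ, (List.ofFn fun i : Fin s.length => z i.1) = s ∧
    ∀ n : ℕ, x ∈ F (List.ofFn fun i : Fin n => z i.1)}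

lemma souslinBelow_subset (F : List ℕ → Set X) (s : List ℕ) : souslinBelow F s ⊆ F s := by
  rintro x ⟨z, hz, h⟩
  have := h s.length
  rwa [hz] at this

lemma souslinBelow_nil (F : List ℕ → Set X) : souslinBelow F [] = SouslinOp F := by
  ext x
  simp [souslinBelow, SouslinOp]

lemma souslinBelow_succ (F : List ℕ → Set X) (s : List ℕ) :
    souslinBelow F s ⊆ ⋃ i : ℕ, souslinBelow F (s ++ [i]) := by
  rintro x ⟨z, hz, h⟩
  refine mem_iUnion.2 ⟨z s.length, z, ?_, h⟩
  have : (s ++ [z s.length]).length = s.length + 1 := by simp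
  have h2 : ∀ n, (List.ofFn fun i : Fin n => z i.1) = pre (fun (_ : Unit) => z) () n :=
    fun n => rfl
  rw [h2, this, pre_succ, ← h2, hz]

theorem URamsey.souslin (F : List ℕ → Set X) (hF : ∀ s, URamsey ι 𝒰 (F s)) :
    URamsey ι 𝒰 (SouslinOp F) := by
  set C : List ℕ → Set X := fun s =>
    {x | ∃ m, ∀ n, m ≤ n → ¬ Rej ι 𝒰 (souslinBelow F s) (pre ι x n)} with hC
  have rejC : ∀ s t, Rej ι 𝒰 (souslinBelow F s) t → Rej ι 𝒰 (C s) t := by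
    intro s t h
    obtain ⟨A, hA, h'⟩ := rej_tree h
    refine ⟨A, hA, fun x hx => ?_⟩
    rintro ⟨m, hm⟩
    exact hm (max m t.length) (le_max_left _ _) (h' x hx _ (le_max_right _ _))
  have accC : ∀ s t, ¬ Rej ι 𝒰 (souslinBelow F s) t → Rej ι 𝒰 (C s)ᶜ t := by
    intro s t h
    obtain ⟨A, hA, h'⟩ := not_rej_tree h
    exact ⟨A, hA, fun x hx hxC => hxC ⟨t.length, h' x hx⟩⟩
  have N1 : ∀ s t, Rej ι 𝒰 (C s \ F s) t := by
    intro s t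
    rcases hF s t with h | h
    · exact (rejC s t (h.mono (souslinBelow_subset F s))).mono sdiff_subset
    · exact h.mono (fun x hx => hx.2)
  have N2 : ∀ s t, Rej ι 𝒰 (C s \ ⋃ i : ℕ, C (s ++ [i])) t := by
    intro s t
    by_contra hcon
    obtain ⟨A, hA, h'⟩ := not_rej_tree hcon
    apply hcon
    have : Rej ι 𝒰 (⋃ i : ℕ, souslinBelow F (s ++ [i])) t := by
      refine rej_iUnion _ hA ?_
      intro x hx n hn i
      by_contra hi
      refine h' x hx n hn ((accC _ _ hi).mono ?_)
      rintro y ⟨_, hy⟩ hy'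
      exact hy (mem_iUnion.2 ⟨i, hy'⟩)
    exact (rejC s t (this.mono (souslinBelow_succ F s))).mono sdiff_subset
  intro t
  by_cases h : Rej ι 𝒰 (souslinBelow F []) t
  · left
    rwa [souslinBelow_nil] at h
  right
  have hall : Rej ι 𝒰 (⋃ s : List ℕ, ((C s \ F s) ∪ (C s \ ⋃ i : ℕ, C (s ++ [i])))) t :=
    rej_iUnion _ (A := fun _ => univ) (fun _ => Filter.univ_mem)
      fun x _ n _ s => (N1 s _).union (N2 s _)
  refine ((accC _ _ h).union hall).mono ?_
  intro x hx
  by_contra hcon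
  apply hx
  simp only [mem_union, mem_compl_iff, not_or, not_not, mem_iUnion, not_exists, mem_sdiff,
    not_and] at hcon
  obtain ⟨h0, hs⟩ := hcon
  have hnext : ∀ s, x ∈ C s → ∃ i : ℕ, x ∈ C (s ++ [i]) := by
    intro s hxs
    have := (hs s).2 hxs
    push Not at this
    exact this
  choose! g hg using hnext
  let L : ℕ → List ℕ := fun n => Nat.rec [] (fun _ l => l ++ [g l]) n
  have hL : ∀ n, x ∈ C (L n) := by
    intro n
    induction n with
    | zero => exact h0
    | succ n ih => exact hg _ ih
  have hL2 : ∀ n, (List.ofFn fun i : Fin n => g (L i.1)) = L n := by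
    intro n
    induction n with
    | zero => rfl
    | succ n ih =>
      rw [List.ofFn_succ_last]
      simp only [Fin.val_castSucc, Fin.val_last]
      rw [ih]
  refine mem_iUnion.2 ⟨fun n => g (L n), mem_iInter.2 fun n => ?_⟩
  rw [hL2]
  exact (hs _).1 (hL n)

end UltraRamsey

section GowersUltrafilter

attribute [local instance] Ultrafilter.add Ultrafilter.addSemigroup

/-- Pointwise version of `tetris`. -/
def tt (z : ℤ) : ℤ := if 0 < z then z - 1 else if z < 0 then z + 1 else 0

/-- Pointwise version of `negT`. -/
def nt (z : ℤ) : ℤ := -tt z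

lemma tetris_iter (j : ℕ) (p : ℕ → ℤ) (n : ℕ) : (tetris^[j] p) n = tt^[j] (p n) := by
  induction j generalizing p with
  | zero => rfl
  | succ j ih => rw [iterate_succ_apply, iterate_succ_apply, ih]; rfl

lemma negT_iter (j : ℕ) (p : ℕ → ℤ) (n : ℕ) : (negT^[j] p) n = nt^[j] (p n) := by
  induction j generalizing p with
  | zero => rfl
  | succ j ih => rw [iterate_succ_apply, iterate_succ_apply, ih]; rfl

lemma tt_zero : tt 0 = 0 := rfl
lemma nt_zero : nt 0 = 0 := rfl

lemma tt_iter_zero (j : ℕ) : tt^[j] 0 = 0 := iterate_fixed tt_zero j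
lemma nt_iter_zero (j : ℕ) : nt^[j] 0 = 0 := iterate_fixed nt_zero j

lemma negT_iter_add {j : ℕ} {p q : ℕ → ℤ} (h : ∀ n, p n = 0 ∨ q n = 0) :
    negT^[j] (p + q) = negT^[j] p + negT^[j] q := by
  ext n
  simp only [Pi.add_apply, negT_iter]
  rcases h n with h | h <;> simp [h, nt_iter_zero]

lemma abs_tt (z : ℤ) : |tt z| = max (|z| - 1) 0 := by
  unfold tt
  split_ifs <;> grind

lemma abs_nt (z : ℤ) : |nt z| = max (|z| - 1) 0 := by
  rw [nt, abs_neg, abs_tt]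

/-- Elements vanishing eventually, for a cofinite ultrafilter. -/
lemma cof_disjoint {l : ℕ} {𝒱 : Ultrafilter (ℕ → ℤ)} (h : IsCofiniteUF l 𝒱)
    {p : ℕ → ℤ} (hp : (Function.support p).Finite) :
    ∀ᶠ q in (𝒱 : Filter (ℕ → ℤ)), ∀ n, p n = 0 ∨ q n = 0 := by
  obtain ⟨M, hM⟩ := hp.bddAbove
  filter_upwards [h.2 (M + 1)] with q hq n
  by_cases hn : p n = 0
  · exact Or.inl hn
  · exact Or.inr (hq n (Nat.lt_succ_of_le (hM hn)))

lemma isFin_negT {k : ℕ} {p : ℕ → ℤ} (h : IsFin (k + 1) p) : IsFin k (negT p) := by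
  have hv : ∀ n, negT p n = nt (p n) := fun n => rfl
  refine ⟨h.1.subset fun n hn => ?_, fun n => ?_, ?_⟩
  · intro h0
    exact hn (by rw [hv, h0]; rfl)
  · have := h.2.1 n
    rw [hv, abs_nt]
    push_cast at this
    grind
  · obtain ⟨n, hn⟩ := h.2.2
    refine ⟨n, ?_⟩
    rw [hv, abs_nt]
    push_cast at hn
    grind

lemma IsFin.add {k l : ℕ} {p q : ℕ → ℤ} (hp : IsFin k p) (hq : IsFin l q)
    (h : ∀ n, p n = 0 ∨ q n = 0) : IsFin (max k l) (p + q) := by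
  have habs : ∀ n, |(p + q) n| = max |p n| |q n| := by
    intro n
    rcases h n with h | h <;> simp [h]
  refine ⟨(hp.1.union hq.1).subset (Function.support_add p q), fun n => ?_, ?_⟩
  · rw [habs]
    push_cast
    exact max_le_max (hp.2.1 n) (hq.2.1 n)
  · rcases le_total k l with hkl | hkl
    · obtain ⟨n, hn⟩ := hq.2.2
      refine ⟨n, ?_⟩
      have := hp.2.1 n
      rw [habs, max_eq_right hkl, hn, max_eq_right]
      exact this.trans (by exact_mod_cast hkl)
    · obtain ⟨n, hn⟩ := hp.2.2
      refine ⟨n, ?_⟩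
      have := hq.2.1 n
      rw [habs, max_eq_left hkl, hn, max_eq_left]
      exact this.trans (by exact_mod_cast hkl)

lemma cof_add {k l : ℕ} {𝒰 𝒱 : Ultrafilter (ℕ → ℤ)} (h : IsCofiniteUF k 𝒰)
    (h' : IsCofiniteUF l 𝒱) : IsCofiniteUF (max k l) (𝒰 + 𝒱) := by
  constructor
  · change ∀ᶠ p in ((𝒰 + 𝒱 : Ultrafilter _) : Filter (ℕ → ℤ)), IsFin (max k l) p
    rw [Ultrafilter.eventually_add]
    filter_upwards [h.1] with p hp
    filter_upwards [h'.1, cof_disjoint h' hp.1] with q hq hd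
    exact hp.add hq hd
  · intro m
    change ∀ᶠ p in ((𝒰 + 𝒱 : Ultrafilter _) : Filter (ℕ → ℤ)), ∀ n < m, p n = 0
    rw [Ultrafilter.eventually_add]
    filter_upwards [h.2 m] with p hp
    filter_upwards [h'.2 m] with q hq n hn
    simp [hp n hn, hq n hn]

lemma map_add_cof {k l : ℕ} {𝒰 𝒱 : Ultrafilter (ℕ → ℤ)} (h : IsCofiniteUF k 𝒰)
    (h' : IsCofiniteUF l 𝒱) (j : ℕ) :
    (𝒰 + 𝒱).map (negT^[j]) = 𝒰.map (negT^[j]) + 𝒱.map (negT^[j]) := by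
  apply Ultrafilter.coe_inj.mp
  refine Filter.ext' fun A => ?_
  rw [Ultrafilter.eventually_add]
  simp only [Ultrafilter.coe_map, Filter.eventually_map, Ultrafilter.eventually_add]
  refine Filter.eventually_congr ?_
  filter_upwards [h.1] with p hp
  refine Filter.eventually_congr ?_
  filter_upwards [cof_disjoint h' hp.1] with q hd
  rw [negT_iter_add hd]

lemma cof_map {k : ℕ} {𝒰 : Ultrafilter (ℕ → ℤ)} (h : IsCofiniteUF (k + 1) 𝒰) :
    IsCofiniteUF k (𝒰.map negT) := by
  constructor
  · change ∀ᶠ p in ((𝒰.map negT : Ultrafilter _) : Filter (ℕ → ℤ)), IsFin k p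
    rw [Ultrafilter.coe_map, Filter.eventually_map]
    filter_upwards [h.1] with p hp using isFin_negT hp
  · intro m
    change ∀ᶠ p in ((𝒰.map negT : Ultrafilter _) : Filter (ℕ → ℤ)), ∀ n < m, p n = 0
    rw [Ultrafilter.coe_map, Filter.eventually_map]
    filter_upwards [h.2 m] with p hp n hn
    change nt (p n) = 0
    rw [hp n hn]; rfl

lemma isFin_zero {p : ℕ → ℤ} (h : IsFin 0 p) : p = 0 := by
  ext n
  have := h.2.1 n
  simpa using this

/-- Existence of a lift. -/
lemma exists_lift (k : ℕ) {𝒰 : Ultrafilter (ℕ → ℤ)} (h : IsCofiniteUF k 𝒰) :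
    ∃ 𝒱 : Ultrafilter (ℕ → ℤ), IsCofiniteUF (k + 1) 𝒱 ∧ 𝒱.map negT = 𝒰 := by
  rcases Nat.eq_zero_or_pos k with rfl | hk
  · have hz : ∀ (𝒱 : Ultrafilter (ℕ → ℤ)), IsCofiniteUF 0 𝒱 → 𝒱 = pure 0 := by
      intro 𝒱 h𝒱
      apply Ultrafilter.coe_inj.mp
      refine (Ultrafilter.unique (pure 0) ?_ 𝒱.neBot)
      rw [Ultrafilter.coe_pure, Filter.le_pure_iff]
      filter_upwards [h𝒱.1] with p hp using isFin_zero hp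
    obtain ⟨ℋ, hℋ⟩ : ∃ ℋ : Ultrafilter ℕ, (ℋ : Filter ℕ) ≤ Filter.atTop :=
      Ultrafilter.exists_le Filter.atTop
    have hcof : IsCofiniteUF 1 (ℋ.map fun n => Pi.single n (1 : ℤ)) := by
      constructor
      · refine Filter.Eventually.of_forall (f := (ℋ : Filter ℕ)) fun n => ?_
        refine ⟨(Set.finite_singleton n).subset (by simp), fun m => ?_, n, by simp⟩
        by_cases hm : m = n
        · subst hm; simp
        · simp [hm]
      · intro m
        change ∀ᶠ n in (ℋ : Filter ℕ), ∀ i < m, (Pi.single n (1 : ℤ) : ℕ → ℤ) i = 0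
        filter_upwards [hℋ (Filter.eventually_ge_atTop m)] with n hn i hi
        have : m ≤ n := hn
        rw [Pi.single_eq_of_ne (by omega)]
    exact ⟨_, hcof, by rw [hz _ h, hz _ (cof_map hcof)]⟩
  · let g : ℤ → ℤ := fun z => if 0 < z then -z - 1 else if z < 0 then -z + 1 else 0
    have hg : ∀ z, nt (g z) = z := by intro z; simp only [g, nt, tt]; grind
    have hgabs : ∀ z, z ≠ 0 → |g z| = |z| + 1 := by intro z hz; simp only [g]; grind
    have hg0 : g 0 = 0 := rfl
    refine ⟨𝒰.map fun p n => g (p n), ⟨?_, ?_⟩, ?_⟩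
    · change ∀ᶠ p in (𝒰 : Filter (ℕ → ℤ)), IsFin (k + 1) fun n => g (p n)
      filter_upwards [h.1] with p hp
      refine ⟨hp.1.subset fun n hn h0 => hn ?_, fun n => ?_, ?_⟩
      · simp only [h0, hg0]
      · have := hp.2.1 n
        by_cases h0 : p n = 0
        · simp only [h0, hg0]; simp; omega
        · simp only [hgabs _ h0]; push_cast; omega
      · obtain ⟨n, hn⟩ := hp.2.2
        refine ⟨n, ?_⟩
        have : p n ≠ 0 := by intro h0; rw [h0] at hn; simp at hn; omega
        rw [hgabs _ this, hn]; push_cast; ring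
    · intro m
      change ∀ᶠ p in (𝒰 : Filter (ℕ → ℤ)), ∀ n < m, g (p n) = 0
      filter_upwards [h.2 m] with p hp n hn
      rw [hp n hn, hg0]
    · rw [Ultrafilter.map_map]
      convert Ultrafilter.map_id 𝒰
      ext p n
      exact hg _

lemma isClosed_cof (k : ℕ) : IsClosed {𝒰 : Ultrafilter (ℕ → ℤ) | IsCofiniteUF k 𝒰} := by
  have : {𝒰 : Ultrafilter (ℕ → ℤ) | IsCofiniteUF k 𝒰} =
      {𝒰 | {p | IsFin k p} ∈ 𝒰} ∩ ⋂ m : ℕ, {𝒰 | {p : ℕ → ℤ | ∀ n < m, p n = 0} ∈ 𝒰} := by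
    ext 𝒰
    simp [IsCofiniteUF]
  rw [this]
  exact (ultrafilter_isClosed_basic _).inter
    (isClosed_iInter fun m => ultrafilter_isClosed_basic _)

lemma isClosed_fiber (𝒰 : Ultrafilter (ℕ → ℤ)) :
    IsClosed {𝒱 : Ultrafilter (ℕ → ℤ) | 𝒱.map negT = 𝒰} := by
  have : {𝒱 : Ultrafilter (ℕ → ℤ) | 𝒱.map negT = 𝒰} =
      ⋂ A ∈ {A | A ∈ 𝒰}, {𝒱 | negT ⁻¹' A ∈ 𝒱} := by
    ext 𝒱
    simp only [mem_ofPred_eq, mem_iInter]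
    constructor
    · rintro rfl A hA
      exact hA
    · intro h
      apply Ultrafilter.coe_inj.mp
      apply 𝒰.unique
      intro A hA
      exact h A hA
  rw [this]
  exact isClosed_biInter fun A _ => ultrafilter_isClosed_basic _

theorem exists_gowers (k : ℕ) : ∃ 𝒰 : Ultrafilter (ℕ → ℤ), IsCofiniteUF k 𝒰 ∧
    ∀ j, 𝒰 + 𝒰.map (negT^[j]) = 𝒰 ∧ 𝒰.map (negT^[j]) + 𝒰 = 𝒰 := by
  induction k with
  | zero =>
    have hz : ∀ j, negT^[j] 0 = 0 := by
      intro j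
      ext n
      rw [negT_iter]
      exact nt_iter_zero j
    refine ⟨pure 0, ⟨?_, ?_⟩, fun j => ?_⟩
    · rw [Ultrafilter.mem_pure]
      simp [IsFin, Function.support]
    · intro m
      rw [Ultrafilter.mem_pure]
      simp
    · rw [Ultrafilter.map_pure, hz]
      have : (pure 0 + pure 0 : Ultrafilter (ℕ → ℤ)) = pure 0 := by
        apply Ultrafilter.coe_inj.mp
        refine Filter.ext' fun A => ?_
        rw [Ultrafilter.eventually_add]
        simp
      exact ⟨this, this⟩
  | succ k ih =>
    obtain ⟨𝒰, hcof, hU⟩ := ih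
    have hid : 𝒰 + 𝒰 = 𝒰 := (hU 0).1
    have hU1 : 𝒰 + 𝒰.map negT = 𝒰 := (hU 1).1
    have hU2 : 𝒰.map negT + 𝒰 = 𝒰 := (hU 1).2
    have hmap : ∀ {a b : ℕ} {𝒳 𝒴 : Ultrafilter (ℕ → ℤ)}, IsCofiniteUF a 𝒳 → IsCofiniteUF b 𝒴 →
        (𝒳 + 𝒴).map negT = 𝒳.map negT + 𝒴.map negT := fun h h' => map_add_cof h h' 1
    let S : Set (Ultrafilter (ℕ → ℤ)) := {𝒱 | IsCofiniteUF (k + 1) 𝒱} ∩ {𝒱 | 𝒱.map negT = 𝒰}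
    have hSc : IsCompact S := ((isClosed_cof _).inter (isClosed_fiber 𝒰)).isCompact
    have hS : ∀ 𝒳 ∈ S, 𝒳 + 𝒰 ∈ S := by
      rintro 𝒳 ⟨h1, h2⟩
      refine ⟨?_, ?_⟩
      · simpa using cof_add h1 hcof
      · rw [mem_ofPred_eq, hmap h1 hcof, h2, hU1]
    have hS' : ∀ 𝒳 ∈ S, 𝒰 + 𝒳 ∈ S := by
      rintro 𝒳 ⟨h1, h2⟩
      refine ⟨?_, ?_⟩
      · simpa using cof_add hcof h1
      · rw [mem_ofPred_eq, hmap hcof h1, h2, hU2]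
    have hSS : ∀ 𝒳 ∈ S, ∀ 𝒴 ∈ S, 𝒳 + 𝒴 ∈ S := by
      rintro 𝒳 ⟨h1, h2⟩ 𝒴 ⟨h3, h4⟩
      refine ⟨?_, ?_⟩
      · simpa using cof_add h1 h3
      · rw [mem_ofPred_eq, hmap h1 h3, h2, h4, hid]
    obtain ⟨𝒲, ⟨𝒳, h𝒳, h𝒳'⟩, hWW⟩ := exists_idempotent_in_compact_add_subsemigroup
      (fun r : Ultrafilter (ℕ → ℤ) => Ultrafilter.continuous_add_left r)
      ((· + 𝒰) '' S) (by
        obtain ⟨𝒱, h1, h2⟩ := exists_lift k hcof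
        exact ⟨_, 𝒱, ⟨h1, h2⟩, rfl⟩)
      (hSc.image (Ultrafilter.continuous_add_left 𝒰)) (by
        rintro _ ⟨𝒳, h𝒳, rfl⟩ _ ⟨𝒴, h𝒴, rfl⟩
        exact ⟨𝒳 + 𝒰 + 𝒴, hSS _ (hS _ h𝒳) _ h𝒴, by simp only [add_assoc]⟩)
    simp only at h𝒳'
    have hWU : 𝒲 + 𝒰 = 𝒲 := by rw [← h𝒳', add_assoc, hid]
    have hWS : 𝒲 ∈ S := by rw [← h𝒳']; exact hS _ h𝒳
    have hV : 𝒰 + 𝒲 ∈ S := hS' _ hWS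
    refine ⟨𝒰 + 𝒲, hV.1, ?_⟩
    rintro (_ | j)
    · have : 𝒰 + 𝒲 + (𝒰 + 𝒲) = 𝒰 + 𝒲 := by
        rw [← add_assoc, add_assoc 𝒰 𝒲 𝒰, hWU, add_assoc, hWW]
      exact ⟨this, this⟩
    · have h1 : (𝒰 + 𝒲).map (negT^[j + 1]) = 𝒰.map (negT^[j]) := by
        rw [iterate_succ, ← Ultrafilter.map_map]
        congr 1
        exact hV.2
      rw [h1]
      constructor
      · calc 𝒰 + 𝒲 + 𝒰.map (negT^[j]) = 𝒰 + (𝒲 + 𝒰) + 𝒰.map (negT^[j]) := by rw [hWU]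
          _ = 𝒰 + 𝒲 + (𝒰 + 𝒰.map (negT^[j])) := by simp only [add_assoc]
          _ = 𝒰 + 𝒲 := by rw [(hU j).1, add_assoc, hWU]
      · rw [← add_assoc, (hU j).2]

/-- Filter form of the previous theorem. -/
def UF (k : ℕ) (𝒰 : Ultrafilter (ℕ → ℤ)) : Prop := IsCofiniteUF k 𝒰 ∧
    ∀ (B : (ℕ → ℤ) → Prop) (i j : ℕ),
      (∀ᶠ p in (𝒰 : Filter (ℕ → ℤ)), B (negT^[min i j] p)) →
      ∀ᶠ p in (𝒰 : Filter (ℕ → ℤ)), ∀ᶠ q in (𝒰 : Filter (ℕ → ℤ)), B (negT^[i] p + negT^[j] q)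

theorem exists_UF (k : ℕ) : ∃ 𝒰 : Ultrafilter (ℕ → ℤ), UF k 𝒰 := by
  obtain ⟨𝒰, h1, h2⟩ := exists_gowers k
  refine ⟨𝒰, h1, ?_⟩
  have h3 : ∀ (B : (ℕ → ℤ) → Prop) (i j : ℕ), (i = 0 ∨ j = 0) →
      (∀ᶠ p in (𝒰 : Filter (ℕ → ℤ)), B p) →
      ∀ᶠ p in (𝒰 : Filter (ℕ → ℤ)), ∀ᶠ q in (𝒰 : Filter (ℕ → ℤ)),
        B (negT^[i] p + negT^[j] q) := by
    rintro B i j (rfl | rfl) hB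
    · rw [← (h2 j).1, Ultrafilter.eventually_add] at hB
      exact hB
    · rw [← (h2 i).2, Ultrafilter.eventually_add] at hB
      exact hB
  intro B i j hB
  have h4 := h3 (fun w => B (negT^[min i j] w)) (i - min i j) (j - min i j) (by omega) hB
  filter_upwards [h4, h1.1] with p hp hpf
  filter_upwards [hp, cof_disjoint h1 hpf.1] with q hq hd
  rw [negT_iter_add, ← iterate_add_apply, ← iterate_add_apply] at hq
  · convert hq using 4 <;> omega
  · intro n
    rw [negT_iter, negT_iter]
    rcases hd n with h | h
    · left; rw [h, nt_iter_zero]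
    · right; rw [h, nt_iter_zero]

end GowersUltrafilter

section Construction

/-- Reading states: completed terms, current partial sum, whether it is already complete. -/
abbrev RState := List (ℕ → ℤ) × (ℕ → ℤ) × Bool

/-- Good states. -/
def Good (k : ℕ) (𝒰 : Ultrafilter (ℕ → ℤ)) (A : List (ℕ → ℤ) → Set (ℕ → ℤ)) : RState → Prop
  | (t, x, false) => ∀ᶠ y in (𝒰 : Filter (ℕ → ℤ)), x + y ∈ A t
  | (t, x, true) => x ∈ A t ∧ ∀ j ∈ Finset.range (k + 1),
      ∀ᶠ y in (𝒰 : Filter (ℕ → ℤ)), x + negT^[j] y ∈ A t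

/-- Add `(-T)^j p` to the current partial sum. -/
def act (j : ℕ) (p : ℕ → ℤ) : RState → RState
  | (t, x, b) => (t, x + negT^[j] p, b || decide (j = 0))

/-- Finish the current term, if it is complete. -/
def fini : RState → RState
  | (t, x, true) => (t ++ [x], 0, false)
  | (t, x, false) => (t, x, false)

variable {k : ℕ} {𝒰 : Ultrafilter (ℕ → ℤ)} {A : List (ℕ → ℤ) → Set (ℕ → ℤ)}

lemma good_fini (hA : ∀ u, A u ∈ 𝒰) {s : RState} (h : Good k 𝒰 A s) : Good k 𝒰 A (fini s) := by
  obtain ⟨t, x, b⟩ := s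
  cases b
  · exact h
  · simp only [fini, Good, zero_add]
    exact hA _

lemma good_act (hU : UF k 𝒰) {s : RState} (h : Good k 𝒰 A s) {j : ℕ}
    (hj : j ∈ Finset.range (k + 1)) :
    ∀ᶠ p in (𝒰 : Filter (ℕ → ℤ)), Good k 𝒰 A (act j p s) := by
  obtain ⟨t, x, b⟩ := s
  cases b
  · have h : ∀ᶠ y in (𝒰 : Filter (ℕ → ℤ)), x + y ∈ A t := h
    rcases Nat.eq_zero_or_pos j with rfl | hj0
    · have h2 : ∀ i ∈ Finset.range (k + 1), ∀ᶠ p in (𝒰 : Filter (ℕ → ℤ)),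
          ∀ᶠ y in (𝒰 : Filter (ℕ → ℤ)), x + p + negT^[i] y ∈ A t := by
        intro i _
        have := hU.2 (fun w => x + w ∈ A t) 0 i (by simpa using h)
        simpa [add_assoc] using this
      rw [← Filter.eventually_all_finset] at h2
      filter_upwards [h, h2] with p hp hp2
      simpa [act, Good] using ⟨hp, by simpa using hp2⟩
    · have := hU.2 (fun w => x + w ∈ A t) j 0 (by simpa using h)
      filter_upwards [this] with p hp
      have hj' : decide (j = 0) = false := by simp; omega
      simp only [act, hj', Bool.or_false, Good]
      simpa [add_assoc] using hp
  · have h1 : ∀ i ∈ Finset.range (k + 1), ∀ᶠ y in (𝒰 : Filter (ℕ → ℤ)), x + negT^[i] y ∈ A t :=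
      h.2
    have h2 : ∀ i ∈ Finset.range (k + 1), ∀ᶠ p in (𝒰 : Filter (ℕ → ℤ)),
        ∀ᶠ y in (𝒰 : Filter (ℕ → ℤ)), x + negT^[j] p + negT^[i] y ∈ A t := by
      intro i hi
      have := hU.2 (fun w => x + w ∈ A t) j i (h1 _ (by simp at hi hj ⊢; omega))
      simpa only [add_assoc] using this
    rw [← Filter.eventually_all_finset] at h2
    filter_upwards [h1 j hj, h2] with p hp hp2
    exact ⟨hp, hp2⟩

/-- Next set of states. -/
def nxt (k : ℕ) (D : Set RState) (p : ℕ → ℤ) : Set RState :=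
  let E := D ∪ ⋃ j ∈ Finset.range (k + 1), act j p '' D
  E ∪ fini '' E

lemma nxt_finite {D : Set RState} (h : D.Finite) (p : ℕ → ℤ) : (nxt k D p).Finite := by
  have : (D ∪ ⋃ j ∈ Finset.range (k + 1), act j p '' D).Finite :=
    h.union ((Finset.finite_toSet _).biUnion fun j _ => h.image _)
  exact this.union (this.image _)

lemma nxt_good (hU : UF k 𝒰) (hA : ∀ u, A u ∈ 𝒰) {D : Set RState} (h : D.Finite)
    (hD : ∀ s ∈ D, Good k 𝒰 A s) :
    ∀ᶠ p in (𝒰 : Filter (ℕ → ℤ)), ∀ s ∈ nxt k D p, Good k 𝒰 A s := by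
  have h1 : ∀ s ∈ D, ∀ j ∈ Finset.range (k + 1),
      ∀ᶠ p in (𝒰 : Filter (ℕ → ℤ)), Good k 𝒰 A (act j p s) :=
    fun s hs j hj => good_act hU (hD s hs) hj
  simp_rw [← Filter.eventually_all_finset] at h1
  rw [← Filter.eventually_all_finite h] at h1
  filter_upwards [h1] with p hp
  have hE : ∀ s ∈ D ∪ ⋃ j ∈ Finset.range (k + 1), act j p '' D, Good k 𝒰 A s := by
    rintro s (hs | hs)
    · exact hD s hs
    · simp only [mem_iUnion] at hs
      obtain ⟨j, hj, s', hs', rfl⟩ := hs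
      exact hp s' hs' j hj
  rintro s (hs | ⟨s, hs, rfl⟩)
  · exact hE s hs
  · exact good_fini hA (hE s hs)

theorem key (hU : UF k 𝒰) (hA : ∀ u, A u ∈ 𝒰) :
    ∃ P : ℕ → ℕ → ℤ, IsBlockSeq k P ∧ ∃ D : ℕ → Set RState,
      ([], 0, false) ∈ D 0 ∧ (∀ n, ∀ s ∈ D n, Good k 𝒰 A s) ∧
      (∀ n, ∀ s ∈ D n, fini s ∈ D n) ∧ (∀ n, D n ⊆ D (n + 1)) ∧
      ∀ n, ∀ s ∈ D n, ∀ j ≤ k, act j (P n) s ∈ D (n + 1) := by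
  have step : ∀ σ : {D : Set RState // D.Finite ∧ ∀ s ∈ D, Good k 𝒰 A s} × ℕ,
      ∃ (p : ℕ → ℤ) (N : ℕ), IsFin k p ∧ (∀ n < σ.2, p n = 0) ∧ (∀ n, N ≤ n → p n = 0) ∧
        σ.2 ≤ N ∧ ∀ s ∈ nxt k σ.1.1 p, Good k 𝒰 A s := by
    intro σ
    have hev : ∀ᶠ p in (𝒰 : Filter (ℕ → ℤ)), IsFin k p ∧ (∀ n < σ.2, p n = 0) ∧
        ∀ s ∈ nxt k σ.1.1 p, Good k 𝒰 A s := by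
      filter_upwards [hU.1.1, hU.1.2 σ.2, nxt_good hU hA σ.1.2.1 σ.1.2.2] with p h1 h2 h3
      exact ⟨h1, h2, h3⟩
    obtain ⟨p, hp1, hp2, hp3⟩ := hev.exists
    obtain ⟨M, hM⟩ := hp1.1.bddAbove
    refine ⟨p, max (M + 1) σ.2, hp1, hp2, fun n hn => ?_, le_max_right _ _, hp3⟩
    by_contra h0
    have := hM (a := n) h0
    have := le_trans (le_max_left _ _) hn
    omega
  choose p N h1 h2 h3 h4 h5 using step
  let σ : ℕ → {D : Set RState // D.Finite ∧ ∀ s ∈ D, Good k 𝒰 A s} × ℕ := fun n =>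
    Nat.rec (⟨{([], 0, false)}, Set.finite_singleton _, by
      intro s hs
      rw [mem_singleton_iff] at hs
      subst hs
      simp only [Good, zero_add]
      exact hA _⟩, 0)
      (fun _ τ => (⟨nxt k τ.1.1 (p τ), nxt_finite τ.1.2.1 _, h5 τ⟩, N τ)) n
  have hσ : ∀ n, (σ (n + 1)).2 = N (σ n) := fun n => rfl
  have hσ' : ∀ n, (σ (n + 1)).1.1 = nxt k (σ n).1.1 (p (σ n)) := fun n => rfl
  have hmono : Monotone fun n => (σ n).2 := monotone_nat_of_le_succ fun n => h4 (σ n)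
  refine ⟨fun n => p (σ n), ⟨fun n => h1 _, ?_⟩, fun n => (σ n).1.1, ?_, fun n => (σ n).1.2.2,
    ?_, ?_, ?_⟩
  · intro m n hmn a b ha hb
    have ha' : a < (σ (m + 1)).2 := by
      by_contra hcon
      exact ha (h3 (σ m) a (by rw [← hσ]; omega))
    have hb' : (σ n).2 ≤ b := by
      by_contra hcon
      exact hb (h2 (σ n) b (by omega))
    have : (σ (m + 1)).2 ≤ (σ n).2 := hmono hmn
    omega
  · exact mem_singleton _
  · intro n s hs
    cases n with
    | zero =>
      have : s = ([], 0, false) := hs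
      subst this
      exact hs
    | succ n =>
      simp only [hσ'] at hs ⊢
      rcases hs with hs | ⟨s, hs, rfl⟩
      · exact Or.inr ⟨s, hs, rfl⟩
      · refine Or.inr ⟨s, hs, ?_⟩
        obtain ⟨t, x, b⟩ := s
        cases b <;> rfl
  · intro n s hs
    exact Or.inl (Or.inl hs)
  · intro n s hs j hj
    refine Or.inl (Or.inr ?_)
    simp only [mem_iUnion]
    exact ⟨j, by simp; omega, s, hs, rfl⟩

open Classical in
theorem key2 (hU : UF k 𝒰) (hA : ∀ u, A u ∈ 𝒰) (hAF : ∀ u, ∀ p ∈ A u, IsFin k p) :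
    ∃ P : ℕ → ℕ → ℤ, IsBlockSeq k P ∧ ∀ (F : ℕ → Finset ℕ) (J : ℕ → ℕ → ℕ),
      (∀ m, ∀ i ∈ F m, J m i ≤ k) → (∀ m, ∃ i ∈ F m, J m i = 0) →
      (∀ m m', m < m' → ∀ i ∈ F m, ∀ i' ∈ F m', i < i') →
      IsBlockSeq k (fun m => ∑ i ∈ F m, negT^[J m i] (P i)) ∧
      ∀ m, (∑ i ∈ F m, negT^[J m i] (P i)) ∈
        A (pre id (fun m => ∑ i ∈ F m, negT^[J m i] (P i)) m) := by
  obtain ⟨P, hP, D, hD0, hgood, hfini, hsub, hact⟩ := key hU hA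
  refine ⟨P, hP, fun F J hJ hJ0 hF => ?_⟩
  set R : ℕ → ℕ → ℤ := fun m => ∑ i ∈ F m, negT^[J m i] (P i) with hR
  have hDm : Monotone D := monotone_nat_of_le_succ hsub
  have main : ∀ m, (∀ n, (∀ m' < m, ∀ i ∈ F m', i < n) → (pre id R m, 0, false) ∈ D n) →
      ∀ n, (∀ i ∈ F m, i < n) → (pre id R m, R m, true) ∈ D n := by
    intro m hm n hn
    obtain ⟨i0, hi0, hJi0⟩ := hJ0 m
    have hne : (F m).Nonempty := ⟨i0, hi0⟩
    have hstart := hm ((F m).min' hne) (fun m' hm' i hi => hF m' m hm' i hi _ (Finset.min'_mem _ _))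
    have claim : ∀ n, (F m).min' hne ≤ n →
        (pre id R m, ∑ i ∈ Finset.range n, (if i ∈ F m then negT^[J m i] (P i) else 0),
          decide (∃ i ∈ F m, i < n ∧ J m i = 0)) ∈ D n := by
      intro n hn
      induction n, hn using Nat.le_induction with
      | base =>
        have e1 : ∑ i ∈ Finset.range ((F m).min' hne),
            (if i ∈ F m then negT^[J m i] (P i) else 0) = 0 := by
          refine Finset.sum_eq_zero fun i hi => ?_
          rw [if_neg]
          intro hiF
          have := Finset.min'_le _ _ hiF
          simp only [Finset.mem_range] at hi
          omega
        have e2 : decide (∃ i ∈ F m, i < (F m).min' hne ∧ J m i = 0) = false := by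
          rw [decide_eq_false_iff_not]
          rintro ⟨i, hiF, hi, _⟩
          have := Finset.min'_le _ _ hiF
          omega
        rw [e1, e2]
        exact hstart
      | succ n hn ih =>
        rw [Finset.sum_range_succ]
        by_cases hnF : n ∈ F m
        · have h1 := hact n _ ih (J m n) (hJ m n hnF)
          simp only [act] at h1
          rw [if_pos hnF]
          convert h1 using 4
          rw [← Bool.decide_or, decide_eq_decide]
          constructor
          · rintro ⟨i, hiF, hi, hi0⟩
            rcases Nat.lt_succ_iff_lt_or_eq.1 hi with h | h
            · exact Or.inl ⟨i, hiF, h, hi0⟩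
            · subst h; exact Or.inr hi0
          · rintro (⟨i, hiF, hi, hi0⟩ | h)
            · exact ⟨i, hiF, by omega, hi0⟩
            · exact ⟨n, hnF, by omega, h⟩
        · rw [if_neg hnF, add_zero]
          have h1 := hsub n ih
          convert h1 using 4
          constructor
          · rintro ⟨i, hiF, hi, hi0⟩
            refine ⟨i, hiF, ?_, hi0⟩
            have : i ≠ n := by rintro rfl; exact hnF hiF
            omega
          · rintro ⟨i, hiF, hi, hi0⟩
            exact ⟨i, hiF, by omega, hi0⟩
    have h1 := claim n (hn _ (Finset.min'_mem _ _)).le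
    have e1 : ∑ i ∈ Finset.range n, (if i ∈ F m then negT^[J m i] (P i) else 0) = R m := by
      rw [Finset.sum_ite_mem, Finset.inter_eq_right.2]
      intro i hi
      simpa using hn i hi
    have e2 : decide (∃ i ∈ F m, i < n ∧ J m i = 0) = true := by
      rw [decide_eq_true_iff]
      exact ⟨i0, hi0, hn _ hi0, hJi0⟩
    rwa [e1, e2] at h1
  have claim : ∀ m n, (∀ m' < m, ∀ i ∈ F m', i < n) → (pre id R m, 0, false) ∈ D n := by
    intro m
    induction m with
    | zero => intro n _; exact hDm (Nat.zero_le n) hD0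
    | succ m ih =>
      intro n hn
      have := hfini n _ (main m ih n (hn m (Nat.lt_succ_self m)))
      rw [pre_succ]
      exact this
  have hmem : ∀ m, R m ∈ A (pre id R m) := by
    intro m
    have := hgood _ _ (main m (claim m) ((F m).sup id + 1)
      fun i hi => Nat.lt_succ_of_le (Finset.le_sup (f := id) hi))
    exact this.1
  refine ⟨⟨fun m => hAF _ _ (hmem m), ?_⟩, hmem⟩
  have hsupp : ∀ m a, R m a ≠ 0 → ∃ i ∈ F m, P i a ≠ 0 := by
    intro m a ha
    simp only [hR, Finset.sum_apply] at ha
    obtain ⟨i, hi, hne⟩ := Finset.exists_ne_zero_of_sum_ne_zero ha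
    refine ⟨i, hi, fun h0 => hne ?_⟩
    rw [negT_iter, h0, nt_iter_zero]
  intro m m' hmm a b ha hb
  obtain ⟨i, hi, hia⟩ := hsupp m a ha
  obtain ⟨i', hi', hib⟩ := hsupp m' b hb
  exact hP.2 i i' (hF m m' hmm i hi i' hi') a b hia hib

end Construction

section Final

lemma blockSeq_uniq {k : ℕ} {P : ℕ → ℕ → ℤ} (hP : IsBlockSeq k P) {i i' x : ℕ}
    (h : P i x ≠ 0) (hi : i' ≠ i) : P i' x = 0 := by
  by_contra h'
  rcases lt_or_gt_of_ne hi with hlt | hlt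
  · exact lt_irrefl _ (hP.2 _ _ hlt x x h' h)
  · exact lt_irrefl _ (hP.2 _ _ hlt x x h h')

lemma tt_neg (z : ℤ) : tt (-z) = -tt z := by simp only [tt]; grind

lemma tt_iter_neg (j : ℕ) (z : ℤ) : tt^[j] (-z) = -tt^[j] z := by
  induction j generalizing z with
  | zero => rfl
  | succ j ih => rw [iterate_succ_apply, iterate_succ_apply, tt_neg, ih]

lemma nt_iter (j : ℕ) (z : ℤ) : nt^[j] z = (-1) ^ j * tt^[j] z := by
  induction j generalizing z with
  | zero => simp
  | succ j ih =>
    rw [iterate_succ_apply, iterate_succ_apply, ih, nt, tt_iter_neg, pow_succ]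
    ring

lemma abs_tt_iter (j : ℕ) (z : ℤ) : |tt^[j] z| = max (|z| - j) 0 := by
  induction j generalizing z with
  | zero => simp
  | succ j ih =>
    rw [iterate_succ_apply, ih, abs_tt]
    push_cast
    grind

lemma abs_tt_sub (z : ℤ) : |z - tt z| ≤ 1 := by simp only [tt]; grind

lemma int_key (ε : ℤ) (hε : ε = 1 ∨ ε = -1) (j b : ℕ) (hb : b = 0 ∨ b = 1) (v : ℤ) :
    |ε * tt^[j] (nt^[b] v) - nt^[if (-1) ^ j = ε then j + b else j + (1 - b)] v| ≤ 1 := by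
  have h1 : ∀ w, tt^[j + 1] w = tt (tt^[j] w) := fun w => iterate_succ_apply' _ _ _
  have h2 : |tt^[j] v - tt (tt^[j] v)| ≤ 1 := abs_tt_sub _
  have h3 : tt^[j] (nt v) = - tt (tt^[j] v) := by
    rw [nt, tt_iter_neg, ← iterate_succ_apply, h1]
  rcases neg_one_pow_eq_or ℤ j with hj | hj <;> rcases hε with rfl | rfl <;>
    rcases hb with rfl | rfl <;>
    simp [hj, nt_iter, pow_succ, h1, h3] <;>
    grind

/-- Span membership in terms of finite sets. -/
lemma span_finset {k : ℕ} {P : ℕ → ℕ → ℤ} {q : ℕ → ℤ} (h : InSpanPM k P q) :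
    ∃ (E : Finset ℕ) (ε : ℕ → ℤ) (j : ℕ → ℕ), (∀ l ∈ E, ε l = 1 ∨ ε l = -1) ∧
      (∀ l ∈ E, j l < k) ∧ (∃ l ∈ E, j l = 0) ∧
      ∀ x, q x = ∑ l ∈ E, ε l * tt^[j l] (P l x) := by
  obtain ⟨m, n, ε, j, hn, hε, hj, ⟨i0, hi0⟩, rfl⟩ := h
  refine ⟨Finset.univ.image n, Function.extend n ε 1, Function.extend n j 0, ?_, ?_, ?_, ?_⟩
  · intro l hl
    obtain ⟨i, _, rfl⟩ := Finset.mem_image.1 hl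
    rw [hn.injective.extend_apply]; exact hε i
  · intro l hl
    obtain ⟨i, _, rfl⟩ := Finset.mem_image.1 hl
    rw [hn.injective.extend_apply]; exact hj i
  · exact ⟨n i0, Finset.mem_image_of_mem _ (Finset.mem_univ _), by
      rw [hn.injective.extend_apply]; exact hi0⟩
  · intro x
    rw [Finset.sum_image hn.injective.injOn, Finset.sum_apply]
    refine Finset.sum_congr rfl fun i _ => ?_
    rw [hn.injective.extend_apply, hn.injective.extend_apply, Pi.smul_apply, tetris_iter,
      smul_eq_mul]

lemma open_pre {k : ℕ} {O : Set (BlockSeq k)} (hO : IsOpen O) : ∀ x ∈ O, ∃ n, ∀ y : BlockSeq k,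
    pre (fun P : BlockSeq k => P.1) y n = pre (fun P : BlockSeq k => P.1) x n → y ∈ O := by
  induction hO with
  | basic O hO =>
    obtain ⟨s, rfl⟩ := hO
    intro x hx
    refine ⟨s.length, fun y hy i => ?_⟩
    have := List.ofFn_injective hy
    exact (congrFun this i).trans (hx i)
  | univ => exact fun x _ => ⟨0, fun _ _ => mem_univ _⟩
  | inter O₁ O₂ _ _ ih₁ ih₂ =>
    intro x hx
    obtain ⟨n₁, h₁⟩ := ih₁ x hx.1
    obtain ⟨n₂, h₂⟩ := ih₂ x hx.2
    have aux : ∀ (y : BlockSeq k) (m n : ℕ), m ≤ n →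
        pre (fun P : BlockSeq k => P.1) y n = pre (fun P : BlockSeq k => P.1) x n →
        pre (fun P : BlockSeq k => P.1) y m = pre (fun P : BlockSeq k => P.1) x m := by
      intro y m n hmn h
      have h2 := pre_mono_le (ι := fun P : BlockSeq k => P.1) y hmn
      rw [h] at h2
      exact (List.prefix_of_prefix_length_le h2 (pre_mono_le x hmn) (by simp)).eq_of_length
        (by simp)
    exact ⟨max n₁ n₂, fun y hy => ⟨h₁ y (aux y _ _ (le_max_left _ _) hy),
      h₂ y (aux y _ _ (le_max_right _ _) hy)⟩⟩
  | sUnion S _ ih =>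
    rintro x ⟨O, hO, hx⟩
    obtain ⟨n, hn⟩ := ih O hO x hx
    exact ⟨n, fun y hy => ⟨O, hO, hn y hy⟩⟩

lemma souslin_ramsey {k : ℕ} (𝒰 : Ultrafilter (ℕ → ℤ)) {B : Set (BlockSeq k)}
    (h : SouslinMeasurable B) : URamsey (fun P : BlockSeq k => P.1) 𝒰 B :=
  h {B | URamsey (fun P : BlockSeq k => P.1) 𝒰 B}
    (fun _ hO => URamsey.of_open (open_pre hO)) (fun _ hB => URamsey.compl hB)
    (fun _ hB _ hC => URamsey.union hB hC) (fun F hF => URamsey.souslin F hF)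

end Final

/-- For every `k, r ≥ 1` and every Souslin measurable colouring
`c : FIN_{±k}^[∞] → r` (metrizable topology) there are `i < r` and
`P ∈ FIN_{±k}^[∞]` with `⟨P⟩_{±k}^[∞] ⊆ (c⁻¹{i})₁`. -/
theorem gowers_infinite_dimensional (k r : ℕ) (hk : 1 ≤ k) (hr : 1 ≤ r)
    (c : BlockSeq k → Fin r) (hc : ∀ i : Fin r, SouslinMeasurable (c ⁻¹' {i})) :
    ∃ (i : Fin r) (P : BlockSeq k),
      ∀ Q : BlockSeq k, (∀ n, InSpanPM k P.1 (Q.1 n)) →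
        ∃ R : BlockSeq k, c R = i ∧ ∀ n, normLe (Q.1 n - R.1 n) 1 := by
  obtain ⟨𝒰, hU⟩ := exists_UF k
  set ι : BlockSeq k → ℕ → ℕ → ℤ := fun P => P.1 with hι
  have hdec : ∀ i : Fin r, ∃ A : List (ℕ → ℤ) → Set (ℕ → ℤ), (∀ u, A u ∈ 𝒰) ∧
      ((∀ x ∈ Br ι [] A, c x ≠ i) ∨ (∀ x ∈ Br ι [] A, c x = i)) := by
    intro i
    rcases souslin_ramsey 𝒰 (hc i) [] with ⟨A, hA, h⟩ | ⟨A, hA, h⟩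
    · exact ⟨A, hA, Or.inl h⟩
    · exact ⟨A, hA, Or.inr fun x hx => not_not.1 (h x hx)⟩
  choose A hA hdec using hdec
  obtain ⟨P, hP, hkey⟩ := key2 (A := fun u => {p | IsFin k p} ∩ ⋂ i, A i u) hU
    (fun u => Filter.inter_mem hU.1.1 (Filter.iInter_mem.2 fun i => hA i u))
    (fun u p hp => hp.1)
  have hbr : ∀ (R : BlockSeq k), (∀ m, R.1 m ∈ {p | IsFin k p} ∩ ⋂ i, A i (pre id R.1 m)) →
      ∀ i, R ∈ Br ι [] (A i) := by
    intro R hR i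
    exact ⟨rfl, fun n _ => mem_iInter.1 (hR n).2 i⟩
  -- the doubled sequence
  have hdouble : ∀ l, ∑ i ∈ ({2 * l, 2 * l + 1} : Finset ℕ), negT^[i % 2] (P i) =
      P (2 * l) + negT (P (2 * l + 1)) := by
    intro l
    rw [Finset.sum_pair (by omega)]
    have h1 : 2 * l % 2 = 0 := by omega
    have h2 : (2 * l + 1) % 2 = 1 := by omega
    rw [h1, h2]
    rfl
  obtain ⟨hP'1, hP'2⟩ := hkey (fun l => {2 * l, 2 * l + 1}) (fun _ i => i % 2)
    (fun m i _ => by omega) (fun m => ⟨2 * m, by simp, by omega⟩)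
    (fun m m' hmm i hi i' hi' => by
      simp only [Finset.mem_insert, Finset.mem_singleton] at hi hi'
      omega)
  simp only [hdouble] at hP'1 hP'2
  set P' : ℕ → ℕ → ℤ := fun l => P (2 * l) + negT (P (2 * l + 1)) with hP'
  let R₀ : BlockSeq k := ⟨P', hP'1⟩
  have hR₀ : ∀ i, R₀ ∈ Br ι [] (A i) := hbr R₀ hP'2
  refine ⟨c R₀, R₀, fun Q hQ => ?_⟩
  have hacc : ∀ x ∈ Br ι [] (A (c R₀)), c x = c R₀ := by
    rcases hdec (c R₀) with h | h
    · exact absurd rfl (h R₀ (hR₀ _))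
    · exact h
  have hspan := fun n => span_finset (hQ n)
  choose E ε j hε hj hj0 hsum using hspan
  have hval : ∀ m l, l ∈ E m → ∀ x, P' l x ≠ 0 → Q.1 m x = ε m l * tt^[j m l] (P' l x) := by
    intro m l hl x hx
    rw [hsum]
    refine Finset.sum_eq_single_of_mem l hl fun l' _ hne => ?_
    have : R₀.1 l' x = 0 := blockSeq_uniq hP'1 hx hne
    rw [this, tt_iter_zero, mul_zero]
  have hnz : ∀ m l, l ∈ E m → ∀ x, |P' l x| = k → Q.1 m x ≠ 0 := by
    intro m l hl x hx
    have h0 : P' l x ≠ 0 := by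
      intro h0
      rw [h0] at hx
      simp at hx
      omega
    rw [hval m l hl x h0]
    have h1 := abs_tt_iter (j m l) (P' l x)
    have h2 := hj m l hl
    have h3 : tt^[j m l] (P' l x) ≠ 0 := by
      intro h3
      rw [h3, hx] at h1
      simp at h1
      omega
    rcases hε m l hl with h | h <;> rw [h] <;> simpa using h3
  have hord : ∀ m m', m < m' → ∀ l ∈ E m, ∀ l' ∈ E m', l < l' := by
    intro m m' hmm l hl l' hl'
    obtain ⟨x, hx⟩ := (hP'1.1 l).2.2
    obtain ⟨x', hx'⟩ := (hP'1.1 l').2.2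
    by_contra hcon
    rcases Nat.eq_or_lt_of_not_lt hcon with h | h
    · subst h
      exact lt_irrefl _ (Q.2.2 m m' hmm x x (hnz m _ hl x hx) (hnz m' _ hl' x hx))
    · have h1 := Q.2.2 m m' hmm x x' (hnz m _ hl x hx) (hnz m' _ hl' x' hx')
      have hk0 : (k : ℤ) ≠ 0 := by omega
      have h2 := hP'1.2 l' l h x' x (by intro h0; rw [h0] at hx'; exact hk0 (by simpa using hx'.symm))
        (by intro h0; rw [h0] at hx; exact hk0 (by simpa using hx.symm))
      omega
  let F : ℕ → Finset ℕ := fun m => (E m).biUnion fun l => {2 * l, 2 * l + 1}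
  have hF : ∀ m i, i ∈ F m ↔ i / 2 ∈ E m := by
    intro m i
    simp only [F, Finset.mem_biUnion, Finset.mem_insert, Finset.mem_singleton]
    constructor
    · rintro ⟨l, hl, h⟩
      have : i / 2 = l := by omega
      rwa [this]
    · intro h
      exact ⟨i / 2, h, by omega⟩
  let J : ℕ → ℕ → ℕ := fun m i =>
    if (-1) ^ (j m (i / 2)) = ε m (i / 2) then j m (i / 2) + i % 2 else j m (i / 2) + (1 - i % 2)
  obtain ⟨hR1, hR2⟩ := hkey F J
    (fun m i hi => by
      have := hj m _ ((hF m i).1 hi)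
      simp only [J]
      split_ifs <;> omega)
    (fun m => by
      obtain ⟨l, hl, hl0⟩ := hj0 m
      have e1 : (2 * l) / 2 = l := by omega
      have e2 : (2 * l + 1) / 2 = l := by omega
      by_cases h : ε m l = 1
      · refine ⟨2 * l, (hF _ _).2 (by rwa [e1]), ?_⟩
        simp [J, hl0, h]
      · refine ⟨2 * l + 1, (hF _ _).2 (by rwa [e2]), ?_⟩
        have h' : ¬ ((1 : ℤ) = ε m l) := fun h' => h h'.symm
        have e3 : (2 * l + 1) % 2 = 1 := by omega
        simp only [J, e2, hl0, pow_zero, h', if_false, e3])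
    (fun m m' hmm i hi i' hi' => by
      have := hord m m' hmm _ ((hF _ _).1 hi) _ ((hF _ _).1 hi')
      omega)
  refine ⟨⟨_, hR1⟩, hacc _ (hbr ⟨_, hR1⟩ hR2 _), fun m x => ?_⟩
  have hP'x : ∀ l, P' l x = P (2 * l) x + nt (P (2 * l + 1) x) := fun l => rfl
  simp only [Pi.sub_apply, Finset.sum_apply, hsum, negT_iter]
  change |∑ l ∈ E m, ε m l * tt^[j m l] (P' l x) - ∑ i ∈ F m, nt^[J m i] (P i x)| ≤ ((1 : ℕ) : ℤ)
  by_cases hall : ∃ i, P i x ≠ 0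
  · obtain ⟨i, hi⟩ := hall
    have huniq : ∀ i', i' ≠ i → P i' x = 0 := fun i' h => blockSeq_uniq hP hi h
    have hP'0 : ∀ l, l ≠ i / 2 → P' l x = 0 := by
      intro l hl
      rw [hP'x, huniq (2 * l) (by omega), huniq (2 * l + 1) (by omega)]
      rfl
    have hP'i : P' (i / 2) x = nt^[i % 2] (P i x) := by
      rw [hP'x]
      rcases Nat.mod_two_eq_zero_or_one i with h | h
      · have e : 2 * (i / 2) = i := by omega
        rw [huniq (2 * (i / 2) + 1) (by omega), e, h, nt_zero, add_zero]; rfl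
      · have e : 2 * (i / 2) + 1 = i := by omega
        rw [huniq (2 * (i / 2)) (by omega), e, h, zero_add]; rfl
    by_cases hE : i / 2 ∈ E m
    · rw [Finset.sum_eq_single_of_mem (i / 2) hE (fun l _ hl => by
          rw [hP'0 l hl, tt_iter_zero, mul_zero]),
        Finset.sum_eq_single_of_mem i ((hF m i).2 hE) (fun i' _ hi' => by
          rw [huniq i' hi', nt_iter_zero]), hP'i]
      exact int_key _ (hε m _ hE) _ _ (Nat.mod_two_eq_zero_or_one i) _
    · rw [Finset.sum_eq_zero (fun l hl => by
          rw [hP'0 l (by rintro rfl; exact hE hl), tt_iter_zero, mul_zero]),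
        Finset.sum_eq_zero (fun i' hi' => by
          rw [huniq i' (by rintro rfl; exact hE ((hF m _).1 hi')), nt_iter_zero])]
      simp
  · push Not at hall
    rw [Finset.sum_eq_zero (fun l hl => by
        rw [hP'x, hall, hall, nt_zero, add_zero, tt_iter_zero, mul_zero]),
      Finset.sum_eq_zero (fun i' hi' => by rw [hall, nt_iter_zero])]
    simp
end

section
/- (Gowers' FIN_{±k} theorem.) For every k, r ∈ ℕ with k, r ≥ 1 and every colouring c : FIN_{±k} → {0, …, r−1} there exist i < r and an infinite block sequence P = (p_n)_{n<ω} in FIN_{±k} such that ⟨P⟩_{±k} ⊆ (c⁻¹{i})₁. -/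
open Function Set

open Filter

namespace GowersPM

attribute [local instance] Ultrafilter.addSemigroup

abbrev UF := Ultrafilter (ℕ → ℤ)

/-! ### Pointwise facts on the tetris operation -/

lemma tetris_near {p q : ℕ → ℤ} (h : ∀ n, |p n + q n| ≤ 1) (n : ℕ) :
    |tetris p n + tetris q n| ≤ 1 := by
  have := h n
  simp only [tetris]
  rw [abs_le] at *
  split_ifs <;> omega

lemma tetris_zero : tetris 0 = 0 := by
  funext n; simp [tetris]

lemma tetris_apply_zero {p : ℕ → ℤ} {n : ℕ} (h : p n = 0) : tetris p n = 0 := by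
  simp [tetris, h]

lemma iter_apply_zero (j : ℕ) {p : ℕ → ℤ} {n : ℕ} (h : p n = 0) : (tetris^[j] p) n = 0 := by
  induction j generalizing p with
  | zero => simpa using h
  | succ j ih => rw [Function.iterate_succ_apply]; exact ih (tetris_apply_zero h)

lemma tetris_self_near (p : ℕ → ℤ) (n : ℕ) : |p n - tetris p n| ≤ 1 := by
  simp only [tetris]
  rw [abs_le]
  split_ifs <;> omega

lemma tetris_abs (p : ℕ → ℤ) (n : ℕ) : |tetris p n| = max (|p n| - 1) 0 := by
  simp only [tetris]
  rcases abs_cases (p n) with h | h <;> split_ifs <;>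
    first
    | (rw [abs_of_nonneg (by omega)]; omega)
    | (rw [abs_of_nonpos (by omega)]; omega)

lemma tetris_isFin {j : ℕ} {p : ℕ → ℤ} (h : IsFin (j + 1) p) : IsFin j (tetris p) := by
  obtain ⟨h1, h2, n, hn⟩ := h
  refine ⟨h1.subset fun m hm => ?_, fun m => ?_, n, ?_⟩
  · intro h0
    exact hm (tetris_apply_zero h0)
  · rw [tetris_abs]
    have := h2 m
    push_cast at this
    omega
  · rw [tetris_abs, hn]
    push_cast
    omega

lemma isFin_zero {p : ℕ → ℤ} (h : IsFin 0 p) : p = 0 := by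
  funext n
  have := h.2.1 n
  simpa using this

lemma iter_isFin {k j : ℕ} (hj : j ≤ k) {p : ℕ → ℤ} (h : IsFin k p) :
    IsFin (k - j) (tetris^[j] p) := by
  induction j with
  | zero => simpa using h
  | succ j ih =>
    rw [Function.iterate_succ_apply']
    apply tetris_isFin
    have := ih (by omega)
    rwa [show k - j = k - (j + 1) + 1 by omega] at this

/-- A finitely supported function vanishes from some point on. -/
lemma exists_bound {p : ℕ → ℤ} (h : (Function.support p).Finite) :
    ∃ m, ∀ n, m ≤ n → p n = 0 := by
  obtain ⟨m, hm⟩ := h.bddAbove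
  refine ⟨m + 1, fun n hn => ?_⟩
  by_contra h0
  have := hm (show n ∈ Function.support p from h0)
  omega

lemma finite_of_bound {p : ℕ → ℤ} {m : ℕ} (h : ∀ n, m ≤ n → p n = 0) :
    (Function.support p).Finite := by
  refine (Set.finite_lt_nat m).subset fun n hn => ?_
  by_contra h0
  exact hn (h n (not_lt.1 h0))

lemma isFin_add {i j m : ℕ} {p q : ℕ → ℤ} (hp : IsFin i p) (hq : IsFin j q)
    (hpm : ∀ n, m ≤ n → p n = 0) (hqm : ∀ n, n < m → q n = 0) : IsFin (max i j) (p + q) := by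
  refine ⟨(hp.1.union hq.1).subset (Function.support_add _ _), fun n => ?_, ?_⟩
  · rcases lt_or_ge n m with h | h
    · have := hp.2.1 n
      simp only [Pi.add_apply, hqm n h, add_zero]
      push_cast; omega
    · have := hq.2.1 n
      simp only [Pi.add_apply, hpm n h, zero_add]
      push_cast; omega
  · have key : ∀ (f g : ℕ → ℤ) (a b : ℕ), IsFin a f → (∀ n, f n ≠ 0 → g n = 0) →
        (∀ n, |g n| ≤ b) → b ≤ a → ∃ n, |f n + g n| = a := by
      intro f g a b hf hg hgb hab
      obtain ⟨n, hn⟩ := hf.2.2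
      refine ⟨n, ?_⟩
      by_cases h0 : f n = 0
      · have h1 := hgb n
        rw [h0] at hn
        simp only [abs_zero] at hn
        have : |g n| = 0 := le_antisymm (by omega) (abs_nonneg _)
        rw [h0, zero_add, this]; exact hn
      · rw [hg n h0, add_zero, hn]
    rcases le_total j i with h | h
    · rw [max_eq_left h]
      refine key p q i j hp (fun n hn => hqm n ?_) hq.2.1 h
      by_contra h0
      exact hn (hpm n (not_lt.1 h0))
    · rw [max_eq_right h]
      have hz : ∀ n, q n ≠ 0 → p n = 0 := fun n hn => hpm n (by
        by_contra h0
        exact hn (hqm n (not_le.1 h0)))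
      obtain ⟨n, hn⟩ := key q p j i hq hz hp.2.1 h
      exact ⟨n, by rw [Pi.add_apply, add_comm]; exact hn⟩

lemma tetris_add {m : ℕ} {p q : ℕ → ℤ}
    (hpm : ∀ n, m ≤ n → p n = 0) (hqm : ∀ n, n < m → q n = 0) :
    tetris (p + q) = tetris p + tetris q := by
  funext n
  rcases lt_or_ge n m with h | h
  · simp [tetris, hqm n h]
  · simp [tetris, hpm n h]

/-! ### Ultrafilters -/

lemma ev_add (U V : UF) (P : (ℕ → ℤ) → Prop) :
    (∀ᶠ p in (U + V : UF), P p) ↔ ∀ᶠ p : ℕ → ℤ in U, ∀ᶠ q : ℕ → ℤ in V, P (p + q) :=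
  Iff.rfl

lemma uf_ext {U V : UF} (h : ∀ P : (ℕ → ℤ) → Prop, (∀ᶠ p : ℕ → ℤ in U, P p) ↔ ∀ᶠ p : ℕ → ℤ in V, P p) :
    U = V := Ultrafilter.coe_inj.mp (Filter.ext' h)

lemma zero_add' (U : UF) : (pure 0 : UF) + U = U := by
  apply uf_ext; intro P
  rw [ev_add]
  simp

lemma add_zero' (U : UF) : U + (pure 0 : UF) = U := by
  apply uf_ext; intro P
  rw [ev_add]
  simp

/-- Cofinite ultrafilters concentrating on finitely supported functions. -/
def Coz (U : UF) : Prop :=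
  (∀ᶠ p : ℕ → ℤ in U, (Function.support p).Finite) ∧ ∀ m : ℕ, ∀ᶠ p : ℕ → ℤ in U, ∀ n, n < m → p n = 0

/-- `U` is approximately `-V`. -/
def Rel (U V : UF) : Prop :=
  ∀ A ∈ V, ∀ᶠ p : ℕ → ℤ in U, ∃ q ∈ A, ∀ n, |p n + q n| ≤ 1

lemma coz_zero : Coz (pure 0) := by
  constructor
  · simp
  · intro m
    simp

lemma coz_add {U V : UF} (hU : Coz U) (hV : Coz V) : Coz (U + V) := by
  constructor
  · rw [ev_add]
    filter_upwards [hU.1] with p hp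
    filter_upwards [hV.1] with q hq
    exact (hp.union hq).subset (Function.support_add _ _)
  · intro m
    rw [ev_add]
    filter_upwards [hU.2 m] with p hp
    filter_upwards [hV.2 m] with q hq n hn
    simp [hp n hn, hq n hn]

lemma coz_map {U : UF} (hU : Coz U) (f : (ℕ → ℤ) → ℕ → ℤ) (hf : ∀ p n, p n = 0 → f p n = 0) :
    Coz (U.map f) := by
  constructor
  · change ∀ᶠ p : ℕ → ℤ in U, (Function.support (f p)).Finite
    filter_upwards [hU.1] with p hp
    exact hp.subset fun n hn h0 => hn (hf p n h0)
  · intro m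
    change ∀ᶠ p : ℕ → ℤ in U, ∀ n, n < m → f p n = 0
    filter_upwards [hU.2 m] with p hp n hn
    exact hf p n (hp n hn)

lemma rel_add {U V U' V' : UF} (hU : Coz U) (hV : Coz V) (hU' : Coz U') (hV' : Coz V')
    (h : Rel U V) (h' : Rel U' V') : Rel (U + U') (V + V') := by
  intro A hA
  have hA' : ∀ᶠ q : ℕ → ℤ in V, ∀ᶠ q' in V', q + q' ∈ A := hA
  have hB := h {q | (∀ᶠ q' in V', q + q' ∈ A) ∧ (Function.support q).Finite} (hA'.and hV.1)
  rw [ev_add]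
  filter_upwards [hB, hU.1] with p hp hpf
  obtain ⟨q, ⟨hq, hqf⟩, hpq⟩ := hp
  obtain ⟨m₁, hm₁⟩ := exists_bound hpf
  obtain ⟨m₂, hm₂⟩ := exists_bound hqf
  have hB' := h' {q' | q + q' ∈ A ∧ ∀ n, n < max m₁ m₂ → q' n = 0} (hq.and (hV'.2 _))
  filter_upwards [hB', hU'.2 (max m₁ m₂)] with p' hp' hp'z
  obtain ⟨q', ⟨hq', hq'z⟩, hpq'⟩ := hp'
  refine ⟨q + q', hq', fun n => ?_⟩
  rcases lt_or_ge n (max m₁ m₂) with hn | hn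
  · simp only [Pi.add_apply, hp'z n hn, hq'z n hn, add_zero]
    exact hpq n
  · simp only [Pi.add_apply, hm₁ n (le_trans (le_max_left _ _) hn),
      hm₂ n (le_trans (le_max_right _ _) hn), zero_add]
    exact hpq' n

lemma rel_zero : Rel (pure 0) (pure 0) := by
  intro A hA
  have hA' : (0 : ℕ → ℤ) ∈ A := hA
  simp only [Ultrafilter.coe_pure, eventually_pure]
  exact ⟨0, hA', by simp⟩

lemma rel_map (W : UF) (f g : (ℕ → ℤ) → ℕ → ℤ) (h : ∀ᶠ p : ℕ → ℤ in W, ∀ n, |f p n + g p n| ≤ 1) :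
    Rel (W.map f) (W.map g) := by
  intro A hA
  have hA' : ∀ᶠ p : ℕ → ℤ in W, g p ∈ A := hA
  change ∀ᶠ p : ℕ → ℤ in W, ∃ q ∈ A, ∀ n, |f p n + q n| ≤ 1
  filter_upwards [h, hA'] with p hp hpA
  exact ⟨g p, hpA, hp⟩

lemma rel_tetris {U V : UF} (h : Rel U V) : Rel (U.map tetris) (V.map tetris) := by
  intro A hA
  change ∀ᶠ p : ℕ → ℤ in U, ∃ q ∈ A, ∀ n, |tetris p n + q n| ≤ 1
  filter_upwards [h (tetris ⁻¹' A) hA] with p hp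
  obtain ⟨q, hq, hpq⟩ := hp
  exact ⟨tetris q, hq, tetris_near hpq⟩

lemma ev_isFin_add {U V : UF} {i j : ℕ} (hV : Coz V)
    (hi : ∀ᶠ p : ℕ → ℤ in U, IsFin i p) (hj : ∀ᶠ p : ℕ → ℤ in V, IsFin j p) :
    ∀ᶠ p in (U + V : UF), IsFin (max i j) p := by
  rw [ev_add]
  filter_upwards [hi] with p hp
  obtain ⟨m, hm⟩ := exists_bound hp.1
  filter_upwards [hj, hV.2 m] with q hq hqm
  exact isFin_add hp hq hm hqm

/-- The tetris operation on ultrafilters. -/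
def Tm (U : UF) : UF := U.map tetris

lemma tm_coz {U : UF} (hU : Coz U) : Coz (Tm U) :=
  coz_map hU tetris fun _ _ h => tetris_apply_zero h

lemma tm_add {U V : UF} (hU : Coz U) (hV : Coz V) : Tm (U + V) = Tm U + Tm V := by
  apply uf_ext; intro P
  change (∀ᶠ p : ℕ → ℤ in U, ∀ᶠ q : ℕ → ℤ in V, P (tetris (p + q))) ↔
    (∀ᶠ p : ℕ → ℤ in U, ∀ᶠ q : ℕ → ℤ in V, P (tetris p + tetris q))
  apply Filter.eventually_congr
  filter_upwards [hU.1] with p hp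
  obtain ⟨m, hm⟩ := exists_bound hp
  apply Filter.eventually_congr
  filter_upwards [hV.2 m] with q hq
  rw [tetris_add hm hq]

lemma tm_zero : Tm (pure 0) = pure 0 := by
  apply uf_ext; intro P
  simp [Tm, tetris_zero]

lemma tm_iter (j : ℕ) (U : UF) : Tm^[j] U = U.map (tetris^[j]) := by
  induction j with
  | zero => simp
  | succ j ih =>
    rw [Function.iterate_succ_apply', ih, Tm, Ultrafilter.map_map, Function.iterate_succ']

lemma tm_iter_coz (j : ℕ) {U : UF} (hU : Coz U) : Coz (Tm^[j] U) := by
  induction j with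
  | zero => simpa
  | succ j ih => rw [Function.iterate_succ_apply']; exact tm_coz ih

lemma tm_iter_add (j : ℕ) {U V : UF} (hU : Coz U) (hV : Coz V) :
    Tm^[j] (U + V) = Tm^[j] U + Tm^[j] V := by
  induction j with
  | zero => simp
  | succ j ih =>
    rw [Function.iterate_succ_apply', ih, tm_add (tm_iter_coz j hU) (tm_iter_coz j hV),
      Function.iterate_succ_apply', Function.iterate_succ_apply']

lemma tm_continuous : Continuous Tm :=
  ultrafilterBasis_is_basis.continuous_iff.2 <| Set.forall_mem_range.mpr fun s ↦
    ultrafilter_isOpen_basic (tetris ⁻¹' s)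

/-- Cofinite subsymmetric ultrafilters on `FIN_{±j}`. -/
def MM (j : ℕ) : Set UF := {U | Coz U ∧ (∀ᶠ p : ℕ → ℤ in U, IsFin j p) ∧ Rel U U}

lemma mm_add {i j : ℕ} {U V : UF} (hU : U ∈ MM i) (hV : V ∈ MM j) : U + V ∈ MM (max i j) :=
  ⟨coz_add hU.1 hV.1, ev_isFin_add hV.1 hU.2.1 hV.2.1,
    rel_add hU.1 hU.1 hV.1 hV.1 hU.2.2 hV.2.2⟩

lemma mm_tm {j : ℕ} {U : UF} (hU : U ∈ MM (j + 1)) : Tm U ∈ MM j := by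
  refine ⟨tm_coz hU.1, ?_, rel_tetris hU.2.2⟩
  change ∀ᶠ p : ℕ → ℤ in U, IsFin j (tetris p)
  filter_upwards [hU.2.1] with p hp using tetris_isFin hp

lemma mm_tm_iter {k j : ℕ} (hj : j ≤ k) {U : UF} (hU : U ∈ MM k) : Tm^[j] U ∈ MM (k - j) := by
  induction j with
  | zero => simpa using hU
  | succ j ih =>
    rw [Function.iterate_succ_apply']
    apply mm_tm
    have := ih (by omega)
    rwa [show k - j = k - (j + 1) + 1 by omega] at this

lemma mm_closed (j : ℕ) : IsClosed (MM j) := by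
  have h1 : ∀ P : (ℕ → ℤ) → Prop, IsClosed {U : UF | ∀ᶠ p : ℕ → ℤ in U, P p} := fun P =>
    ultrafilter_isClosed_basic {p | P p}
  have : MM j = ({U : UF | ∀ᶠ p : ℕ → ℤ in U, (Function.support p).Finite} ∩
      ⋂ m : ℕ, {U : UF | ∀ᶠ p : ℕ → ℤ in U, ∀ n, n < m → p n = 0}) ∩
      ({U : UF | ∀ᶠ p : ℕ → ℤ in U, IsFin j p} ∩
      ⋂ A : Set (ℕ → ℤ), ({U : UF | A ∈ U}ᶜ ∪
        {U : UF | ∀ᶠ p : ℕ → ℤ in U, ∃ q ∈ A, ∀ n, |p n + q n| ≤ 1})) := by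
    ext U
    simp only [MM, Coz, Rel, Set.mem_inter_iff, Set.mem_iInter, Set.mem_union, Set.mem_compl_iff,
      Set.mem_ofPred_eq, imp_iff_not_or]
  rw [this]
  refine ((h1 _).inter (isClosed_iInter fun m => h1 _)).inter ((h1 _).inter
    (isClosed_iInter fun A => IsClosed.union ?_ (h1 _)))
  exact (ultrafilter_isOpen_basic A).isClosed_compl

lemma mm_zero {U : UF} (hU : U ∈ MM 0) : U = pure 0 := by
  apply uf_ext; intro P
  have : ∀ᶠ p : ℕ → ℤ in U, p = 0 := by
    filter_upwards [hU.2.1] with p hp using isFin_zero hp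
  have h2 : (∀ᶠ p : ℕ → ℤ in U, P p) ↔ ∀ᶠ p : ℕ → ℤ in U, P 0 := by
    apply Filter.eventually_congr
    filter_upwards [this] with p hp
    rw [hp]
  rw [h2]
  simp

/-! ### Existence of subsymmetric ultrafilters -/

/-- Finite sums of ultrafilters. -/
def sSum (b : ℕ → UF) : ℕ → UF
  | 0 => pure 0
  | n + 1 => sSum b n + b n

lemma sSum_shift (b : ℕ → UF) (n : ℕ) : sSum b (n + 1) = b 0 + sSum (fun i => b (i + 1)) n := by
  induction n with
  | zero => simp only [sSum]; rw [zero_add', add_zero']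
  | succ n ih =>
    rw [sSum, ih, sSum, add_assoc]

lemma sSum_coz {b : ℕ → UF} (h : ∀ n, Coz (b n)) (n : ℕ) : Coz (sSum b n) := by
  induction n with
  | zero => exact coz_zero
  | succ n ih => exact coz_add ih (h n)

lemma sSum_rel {b c : ℕ → UF} (hb : ∀ n, Coz (b n)) (hc : ∀ n, Coz (c n))
    (h : ∀ n, Rel (b n) (c n)) (n : ℕ) : Rel (sSum b n) (sSum c n) := by
  induction n with
  | zero => exact rel_zero
  | succ n ih => exact rel_add (sSum_coz hb n) (sSum_coz hc n) (hb n) (hc n) ih (h n)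

lemma sSum_fin {b : ℕ → UF} (hb : ∀ n, Coz (b n)) {l : ℕ → ℕ}
    (h : ∀ n, ∀ᶠ p in b n, IsFin (l n) p) (n : ℕ) :
    ∀ᶠ p in sSum b n, IsFin ((Finset.range n).sup l) p := by
  induction n with
  | zero =>
    simp only [sSum, Ultrafilter.coe_pure, eventually_pure]
    refine ⟨by simp, by simp, 0, by simp⟩
  | succ n ih =>
    have := ev_isFin_add (hb n) ih (h n)
    rw [Finset.range_add_one, Finset.sup_insert, max_comm]
    exact this

lemma exists_coz (k : ℕ) : ∃ W : UF, Coz W ∧ ∀ᶠ p : ℕ → ℤ in W, IsFin k p := by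
  let x : ℕ → ℕ → ℤ := fun i => Pi.single i (k : ℤ)
  have hx : ∀ i, IsFin k (x i) := by
    intro i
    refine ⟨(Set.finite_singleton i).subset ?_, fun n => ?_, i, by simp [x]⟩
    · exact Function.support_subset_iff'.2 fun n hn => by
        simp only [x]; exact Pi.single_eq_of_ne (by simpa using hn) _
    · by_cases h : n = i
      · subst h; simp [x]
      · simp [x, Pi.single_eq_of_ne h]
  refine ⟨(hyperfilter ℕ).map x, ⟨?_, ?_⟩, ?_⟩
  · change ∀ᶠ i in (hyperfilter ℕ : Filter ℕ), (Function.support (x i)).Finite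
    exact Eventually.of_forall fun i => (hx i).1
  · intro m
    change ∀ᶠ i in (hyperfilter ℕ : Filter ℕ), ∀ n, n < m → x i n = 0
    have : ∀ᶠ i in (hyperfilter ℕ : Filter ℕ), m ≤ i := by
      apply hyperfilter_le_cofinite
      rw [Nat.cofinite_eq_atTop]
      exact eventually_ge_atTop m
    filter_upwards [this] with i hi n hn
    exact Pi.single_eq_of_ne (by omega) _
  · change ∀ᶠ i in (hyperfilter ℕ : Filter ℕ), IsFin k (x i)
    exact Eventually.of_forall hx

lemma isFin_neg {j : ℕ} {p : ℕ → ℤ} (h : IsFin j p) : IsFin j (-p) := by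
  refine ⟨by simpa using h.1, by simpa using h.2.1, by simpa using h.2.2⟩

lemma isFin_smul {j : ℕ} {p : ℕ → ℤ} (h : IsFin j p) (n : ℕ) : IsFin j ((-1 : ℤ) ^ n • p) := by
  rcases neg_one_pow_eq_or ℤ n with h' | h' <;> rw [h']
  · simpa using h
  · simpa using isFin_neg h

lemma iter_near (p : ℕ → ℤ) (a b n i : ℕ) (hab : a = b + 1 ∨ b = a + 1) :
    |((-1 : ℤ) ^ n • tetris^[a] p) i + ((-1 : ℤ) ^ (n + 1) • tetris^[b] p) i| ≤ 1 := by
  have key : |(tetris^[a] p) i - (tetris^[b] p) i| ≤ 1 := by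
    rcases hab with rfl | rfl
    · rw [Function.iterate_succ_apply', abs_sub_comm]; exact tetris_self_near _ _
    · rw [Function.iterate_succ_apply']; exact tetris_self_near _ _
  rw [pow_succ]
  rcases neg_one_pow_eq_or ℤ n with h' | h' <;> rw [h']
  · simpa [sub_eq_add_neg] using key
  · rw [abs_sub_comm] at key
    have e : ((-1 : ℤ) • tetris^[a] p) i + ((-1 * -1 : ℤ) • tetris^[b] p) i =
        (tetris^[b] p) i - (tetris^[a] p) i := by simp; ring
    rw [e]; exact key

lemma mm_nonempty (k : ℕ) (hk : 1 ≤ k) : (MM k).Nonempty := by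
  obtain ⟨W, hW, hWk⟩ := exists_coz k
  let d : ℕ → ℕ := fun n => (n - k) + (k - n)
  let f : ℕ → (ℕ → ℤ) → ℕ → ℤ := fun n p => (-1 : ℤ) ^ n • tetris^[min k (d n)] p
  let b : ℕ → UF := fun n => if n ≤ 2 * k then W.map (f n) else pure 0
  have hd : ∀ n, n ≤ 2 * k → d n ≤ k := by intro n hn; simp only [d]; omega
  have hbz : ∀ n, d n = k → b n = pure 0 := by
    intro n hn
    simp only [b]
    split_ifs
    · apply uf_ext; intro P
      change (∀ᶠ p : ℕ → ℤ in W, P (f n p)) ↔ _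
      have : (∀ᶠ p : ℕ → ℤ in W, P (f n p)) ↔ ∀ᶠ p : ℕ → ℤ in W, P 0 := by
        apply Filter.eventually_congr
        filter_upwards [hWk] with p hp
        have := iter_isFin (le_refl k) hp
        rw [Nat.sub_self] at this
        simp only [f, hn, min_self]
        rw [isFin_zero this, smul_zero]
      rw [this]; simp
    · rfl
  have hbc : ∀ n, Coz (b n) := by
    intro n
    simp only [b]
    split_ifs
    · apply coz_map hW
      intro p i h
      simp only [f, Pi.smul_apply, iter_apply_zero _ h, smul_zero]
    · exact coz_zero
  have hb0 : b 0 = pure 0 := hbz 0 (by simp [d])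
  have hb2 : b (2 * k) = pure 0 := hbz _ (by simp only [d]; omega)
  have hrel : ∀ n, Rel (b n) (b (n + 1)) := by
    intro n
    rcases lt_trichotomy n (2 * k) with h | h | h
    · simp only [b, if_pos h.le, if_pos (Nat.succ_le_of_lt h)]
      apply rel_map
      refine Eventually.of_forall fun p i => ?_
      apply iter_near
      rw [min_eq_right (hd _ h.le), min_eq_right (hd _ h)]
      simp only [d]
      omega
    · have h3 : b (n + 1) = pure 0 := by simp only [b]; rw [if_neg (by omega)]
      rw [h3, h, hb2]; exact rel_zero
    · have h2 : b n = pure 0 := by simp only [b]; rw [if_neg (by omega)]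
      have h3 : b (n + 1) = pure 0 := by simp only [b]; rw [if_neg (by omega)]
      rw [h2, h3]; exact rel_zero
  have hfin : ∀ n, ∀ᶠ p in b n, IsFin (k - min k (d n)) p := by
    intro n
    by_cases h : n ≤ 2 * k
    · simp only [b, if_pos h]
      change ∀ᶠ p : ℕ → ℤ in W, IsFin (k - min k (d n)) (f n p)
      filter_upwards [hWk] with p hp
      exact isFin_smul (iter_isFin (min_le_left _ _) hp) n
    · simp only [b, if_neg h, Ultrafilter.coe_pure, eventually_pure]
      have : k - min k (d n) = 0 := by simp only [d]; omega
      rw [this]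
      exact ⟨by simp, by simp, 0, by simp⟩
  have hshift : sSum b (2 * k) = sSum (fun i => b (i + 1)) (2 * k) := by
    have := sSum_shift b (2 * k)
    rw [sSum, hb0, hb2, zero_add', add_zero'] at this
    exact this
  refine ⟨sSum b (2 * k), sSum_coz hbc _, ?_, ?_⟩
  · have := sSum_fin hbc hfin (2 * k)
    have e : (Finset.range (2 * k)).sup (fun n => k - min k (d n)) = k := by
      apply le_antisymm
      · exact Finset.sup_le fun n _ => Nat.sub_le _ _
      · have h2 := Finset.le_sup (f := fun n => k - min k (d n))
          (show k ∈ Finset.range (2 * k) by simp; omega)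
        simpa [d] using h2
    rwa [e] at this
  · conv => arg 2; rw [hshift]
    exact sSum_rel hbc (fun n => hbc _) hrel _

/-! ### The tower of idempotents -/

/-- The image of `MM k` under `T^{k-j}`. -/
def NN (k j : ℕ) : Set UF := Tm^[k - j] '' MM k

lemma nn_closed (k j : ℕ) : IsClosed (NN k j) :=
  ((mm_closed k).isCompact.image (tm_continuous.iterate _)).isClosed

lemma nn_sub {k j : ℕ} (hj : j ≤ k) {U : UF} (hU : U ∈ NN k j) : U ∈ MM j := by
  obtain ⟨V, hV, rfl⟩ := hU
  have := mm_tm_iter (Nat.sub_le k j) hV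
  rwa [show k - (k - j) = j by omega] at this

lemma nn_lift {k j : ℕ} (hj : j < k) {U : UF} (hU : U ∈ NN k j) :
    ∃ V ∈ NN k (j + 1), Tm V = U := by
  obtain ⟨V, hV, rfl⟩ := hU
  refine ⟨Tm^[k - (j + 1)] V, ⟨V, hV, rfl⟩, ?_⟩
  rw [← Function.iterate_succ_apply' Tm, show (k - (j + 1)).succ = k - j by omega]

lemma nn_add {k i j : ℕ} (hij : i ≤ j) (hj : j ≤ k) {U V : UF}
    (hU : U ∈ NN k j) (hV : V ∈ NN k i) : U + V ∈ NN k j ∧ V + U ∈ NN k j := by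
  obtain ⟨U, hU, rfl⟩ := hU
  obtain ⟨V, hV, rfl⟩ := hV
  have e : Tm^[k - i] V = Tm^[k - j] (Tm^[j - i] V) := by
    rw [← Function.iterate_add_apply, show k - j + (j - i) = k - i by omega]
  have hV' := mm_tm_iter (show j - i ≤ k by omega) hV
  rw [e, ← tm_iter_add _ hU.1 hV'.1, ← tm_iter_add _ hV'.1 hU.1]
  constructor
  · refine ⟨_, ?_, rfl⟩
    have := mm_add hU hV'
    rwa [max_eq_left (Nat.sub_le _ _)] at this
  · refine ⟨_, ?_, rfl⟩
    have := mm_add hV' hU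
    rwa [max_eq_right (Nat.sub_le _ _)] at this

lemma tower_step {k j : ℕ} (hj : j < k) {e : UF} (he : e ∈ NN k j) (hee : e + e = e)
    (h1 : e + Tm e = e) (h2 : Tm e + e = e) :
    ∃ U ∈ NN k (j + 1), Tm U = e ∧ U + U = U ∧ U + e = U ∧ e + U = U := by
  have hec : Coz e := (nn_sub hj.le he).1
  have hc : ∀ {V : UF}, V ∈ NN k (j + 1) → Coz V := fun hV => (nn_sub hj hV).1
  let S : Set UF := NN k (j + 1) ∩ {V | Tm V = e}
  have hScl : IsClosed S := (nn_closed k (j + 1)).inter (isClosed_singleton.preimage tm_continuous)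
  have hSe : ∀ V ∈ S, V + e ∈ S := by
    rintro V ⟨hV, hVe⟩
    refine ⟨(nn_add (Nat.le_succ j) hj hV he).1, ?_⟩
    change Tm (V + e) = e
    rw [tm_add (hc hV) hec, show Tm V = e from hVe, h1]
  have hadd : ∀ V ∈ S, ∀ V' ∈ S, V + V' ∈ S := by
    rintro V ⟨hV, hVe⟩ V' ⟨hV', hVe'⟩
    refine ⟨(nn_add le_rfl hj hV hV').1, ?_⟩
    change Tm (V + V') = e
    rw [tm_add (hc hV) (hc hV'), show Tm V = e from hVe, show Tm V' = e from hVe', hee]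
  obtain ⟨V₀, hV₀, hV₀e⟩ := nn_lift hj he
  have hcont : ∀ r : UF, Continuous (· + r) := fun r => Ultrafilter.continuous_add_left r
  obtain ⟨W, ⟨V, hV, hVW⟩, hWW⟩ := exists_idempotent_in_compact_add_subsemigroup hcont
    ((· + e) '' S) ⟨_, V₀, ⟨hV₀, hV₀e⟩, rfl⟩ (hScl.isCompact.image (hcont e)) (by
      rintro _ ⟨V, hV, rfl⟩ _ ⟨V', hV', rfl⟩
      refine ⟨V + e + V', hadd _ (hSe _ hV) _ hV', ?_⟩
      simp only [add_assoc])
  have hVW' : V + e = W := hVW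
  have hWS : W ∈ S := hVW' ▸ hSe V hV
  have hWe : W + e = W := by rw [← hVW', add_assoc, hee]
  refine ⟨e + W, (nn_add (Nat.le_succ j) hj hWS.1 he).2, ?_, ?_, ?_, ?_⟩
  · rw [tm_add hec (hc hWS.1), show Tm W = e from hWS.2, h2]
  · rw [add_assoc, ← add_assoc W e W, hWe, hWW]
  · rw [add_assoc, hWe]
  · rw [← add_assoc, hee]

lemma tower {k : ℕ} (hk : 1 ≤ k) (j : ℕ) (hj : j ≤ k) :
    ∃ e ∈ NN k j, ∀ i i' : ℕ, Tm^[i] e + Tm^[i'] e = Tm^[min i i'] e := by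
  induction j with
  | zero =>
    obtain ⟨V, hV⟩ := mm_nonempty k hk
    have h0 : Tm^[k - 0] V ∈ NN k 0 := ⟨V, hV, rfl⟩
    have h1 := mm_zero (nn_sub (Nat.zero_le k) h0)
    rw [h1] at h0
    refine ⟨_, h0, fun i i' => ?_⟩
    have h2 : ∀ i, Tm^[i] (pure 0) = pure 0 := fun i => Function.iterate_fixed tm_zero i
    rw [h2, h2, h2, zero_add']
  | succ j ih =>
    obtain ⟨e, he, hmin⟩ := ih (by omega)
    obtain ⟨U, hU, hUe, hUU, hUe1, hUe2⟩ := tower_step hj he (by simpa using hmin 0 0)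
      (by simpa using hmin 0 1) (by simpa using hmin 1 0)
    refine ⟨U, hU, fun i i' => ?_⟩
    rcases i with _ | i <;> rcases i' with _ | i'
    · simpa using hUU
    · simp only [Function.iterate_succ_apply, hUe, Nat.zero_min, Function.iterate_zero, id]
      rw [← hUe1, add_assoc]
      congr 1
      simpa using hmin 0 i'
    · simp only [Function.iterate_succ_apply, hUe, Nat.min_zero, Function.iterate_zero, id]
      rw [← hUe2, ← add_assoc]
      congr 1
      simpa using hmin i 0
    · rw [Nat.succ_min_succ]
      simp only [Function.iterate_succ_apply, hUe]
      exact hmin i i'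

lemma exists_gowers_uf {k : ℕ} (hk : 1 ≤ k) :
    ∃ U ∈ MM k, ∀ i i' : ℕ, Tm^[i] U + Tm^[i'] U = Tm^[min i i'] U := by
  obtain ⟨U, hU, h⟩ := tower hk k le_rfl
  exact ⟨U, nn_sub le_rfl hU, h⟩

/-! ### The construction of the block sequence -/

/-- Functions which can be extended into `A` at depth `l`. -/
def GG (k : ℕ) (U : UF) (A : Set (ℕ → ℤ)) (l : ℕ) : Set (ℕ → ℤ) :=
  {q | ∀ j ≤ k, min l j = 0 → ∀ᶠ x : ℕ → ℤ in U, q + tetris^[j] x ∈ A}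

lemma gg_step {k : ℕ} {U : UF} (hU : ∀ i i' : ℕ, Tm^[i] U + Tm^[i'] U = Tm^[min i i'] U)
    {A : Set (ℕ → ℤ)} {l : ℕ} {q : ℕ → ℤ} (hq : q ∈ GG k U A l) {j : ℕ} (hj : j ≤ k) :
    ∀ᶠ x : ℕ → ℤ in U, q + tetris^[j] x ∈ GG k U A (min l j) := by
  have : ∀ i ∈ Set.Iic k, ∀ᶠ x : ℕ → ℤ in U, min (min l j) i = 0 →
      ∀ᶠ y : ℕ → ℤ in U, q + tetris^[j] x + tetris^[i] y ∈ A := by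
    intro i hi
    by_cases h0 : min (min l j) i = 0
    · have h1 := hq (min j i) (le_trans (min_le_left _ _) hj) (by rw [← min_assoc]; exact h0)
      have h2 : ∀ᶠ z in (Tm^[min j i] U : UF), q + z ∈ A := by
        rw [tm_iter]; exact h1
      rw [← hU, tm_iter, tm_iter] at h2
      have h3 : ∀ᶠ x : ℕ → ℤ in U, ∀ᶠ y : ℕ → ℤ in U, q + (tetris^[j] x + tetris^[i] y) ∈ A := h2
      filter_upwards [h3] with x hx _
      simpa only [add_assoc] using hx
    · exact Eventually.of_forall fun x h => absurd h h0
  have h := (Filter.eventually_all_finite (Set.finite_Iic k)).2 this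
  filter_upwards [h] with x hx i hi h0
  exact hx i hi h0

/-- Requirements on a pair (partial sum, depth) with supports below `m`. -/
def Ok (k : ℕ) (U : UF) (A : Set (ℕ → ℤ)) (m : ℕ) (y : (ℕ → ℤ) × ℕ) : Prop :=
  (∀ n, m ≤ n → y.1 n = 0) ∧
    ∃ q' ∈ GG k U A y.2, (∀ n, m ≤ n → q' n = 0) ∧ ∀ n, |y.1 n - q' n| ≤ 1

lemma ok_mono {k : ℕ} {U : UF} {A : Set (ℕ → ℤ)} {m m' : ℕ} (h : m ≤ m') {y : (ℕ → ℤ) × ℕ}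
    (hy : Ok k U A m y) : Ok k U A m' y := by
  obtain ⟨h1, q', hq', h2, h3⟩ := hy
  exact ⟨fun n hn => h1 n (h.trans hn), q', hq', fun n hn => h2 n (h.trans hn), h3⟩

lemma ok_step {k : ℕ} {U : UF} (hUM : U ∈ MM k)
    (hU : ∀ i i' : ℕ, Tm^[i] U + Tm^[i'] U = Tm^[min i i'] U)
    {A : Set (ℕ → ℤ)} {m : ℕ} {y : (ℕ → ℤ) × ℕ} (hy : Ok k U A m y)
    {ε : ℤ} (hε : ε = 1 ∨ ε = -1) {j : ℕ} (hj : j ≤ k) :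
    ∀ᶠ p : ℕ → ℤ in U, ∃ m', Ok k U A m' (y.1 + ε • tetris^[j] p, min y.2 j) := by
  obtain ⟨h1, q', hq', h2, h3⟩ := hy
  have hMj := mm_tm_iter hj hUM
  let B : Set (ℕ → ℤ) := {x | (q' + x ∈ GG k U A (min y.2 j) ∧ (Function.support x).Finite) ∧
    ∀ n, n < m → x n = 0}
  have hB : B ∈ Tm^[j] U := by
    have e1 : ∀ᶠ x in (Tm^[j] U : UF), q' + x ∈ GG k U A (min y.2 j) := by
      rw [tm_iter]; exact gg_step hU hq' hj
    exact (e1.and hMj.1.1).and (hMj.1.2 m)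
  have near : ∀ᶠ x : ℕ → ℤ in (Tm^[j] U : UF), ∃ x' ∈ B, ∀ n, |ε * x n - x' n| ≤ 1 := by
    rcases hε with rfl | rfl
    · filter_upwards [hB] with x hx
      exact ⟨x, hx, fun n => by simp⟩
    · filter_upwards [hMj.2.2 B hB] with x hx
      obtain ⟨x', hx', h⟩ := hx
      refine ⟨x', hx', fun n => ?_⟩
      rw [show -1 * x n - x' n = -(x n + x' n) by ring, abs_neg]
      exact h n
  rw [tm_iter] at near
  have near' : ∀ᶠ p : ℕ → ℤ in U, ∃ x' ∈ B, ∀ n, |ε * (tetris^[j] p) n - x' n| ≤ 1 := near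
  filter_upwards [near', hUM.1.1, hUM.1.2 m] with p hp hpf hpm
  obtain ⟨x', ⟨⟨hx'G, hx'f⟩, hx'm⟩, hx'⟩ := hp
  obtain ⟨m₁, hm₁⟩ := exists_bound hpf
  obtain ⟨m₂, hm₂⟩ := exists_bound hx'f
  refine ⟨max m (max m₁ m₂), fun n hn => ?_, q' + x', hx'G, fun n hn => ?_, fun n => ?_⟩
  · simp only [Pi.add_apply, Pi.smul_apply]
    rw [h1 n (by omega), iter_apply_zero j (hm₁ n (by omega)), smul_zero, add_zero]
  · simp only [Pi.add_apply]
    rw [h2 n (by omega), hm₂ n (by omega), add_zero]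
  · simp only [Pi.add_apply, Pi.smul_apply, smul_eq_mul]
    rcases lt_or_ge n m with h | h
    · rw [iter_apply_zero j (hpm n h), hx'm n h]
      simpa using h3 n
    · rw [h1 n h, h2 n h]
      simpa using hx' n

/-- The one-step extensions of a set of (partial sum, depth) pairs. -/
def nextF (k : ℕ) (F : Set ((ℕ → ℤ) × ℕ)) (p : ℕ → ℤ) : Set ((ℕ → ℤ) × ℕ) :=
  (fun z : ((ℕ → ℤ) × ℕ) × (ℤ × ℕ) => (z.1.1 + z.2.1 • tetris^[z.2.2] p, min z.1.2 z.2.2)) ''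
    (F ×ˢ (({1, -1} : Set ℤ) ×ˢ Set.Iic k))

/-- States of the construction. -/
def State (k : ℕ) (U : UF) (A : Set (ℕ → ℤ)) : Type :=
  {s : Set ((ℕ → ℤ) × ℕ) × ℕ // s.1.Finite ∧ ∀ y ∈ s.1, Ok k U A s.2 y}

lemma state_step {k : ℕ} {U : UF} (hUM : U ∈ MM k)
    (hU : ∀ i i' : ℕ, Tm^[i] U + Tm^[i'] U = Tm^[min i i'] U)
    {A : Set (ℕ → ℤ)} (s : State k U A) :
    ∃ (p : ℕ → ℤ) (s' : State k U A), IsFin k p ∧ (∀ n, n < s.1.2 → p n = 0) ∧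
      (∀ n, s'.1.2 ≤ n → p n = 0) ∧ s.1.2 ≤ s'.1.2 ∧ s'.1.1 = nextF k s.1.1 p := by
  obtain ⟨⟨F, m⟩, hF, hok⟩ := s
  have hZ : (F ×ˢ (({1, -1} : Set ℤ) ×ˢ Set.Iic k)).Finite :=
    hF.prod ((Set.toFinite _).prod (Set.finite_Iic k))
  have hev : ∀ᶠ p : ℕ → ℤ in U, ∀ z ∈ F ×ˢ (({1, -1} : Set ℤ) ×ˢ Set.Iic k),
      ∃ m', Ok k U A m' (z.1.1 + z.2.1 • tetris^[z.2.2] p, min z.1.2 z.2.2) := by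
    refine (Filter.eventually_all_finite hZ).2 ?_
    rintro ⟨y, ε, j⟩ ⟨hy, hε, hj⟩
    exact ok_step hUM hU (hok y hy) (by simpa using hε) hj
  obtain ⟨p, ⟨hp, hpk⟩, hpm⟩ := ((hev.and hUM.2.1).and (hUM.1.2 m)).exists
  obtain ⟨m₁, hm₁⟩ := exists_bound hpk.1
  have hfinal : ∀ᶠ m' : ℕ in atTop, ∀ z ∈ F ×ˢ (({1, -1} : Set ℤ) ×ˢ Set.Iic k),
      Ok k U A m' (z.1.1 + z.2.1 • tetris^[z.2.2] p, min z.1.2 z.2.2) := by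
    refine (Filter.eventually_all_finite hZ).2 fun z hz => ?_
    obtain ⟨m', hm'⟩ := hp z hz
    filter_upwards [eventually_ge_atTop m'] with m'' h using ok_mono h hm'
  obtain ⟨m', ⟨hm', hm'1⟩, hm'2⟩ :=
    ((hfinal.and (eventually_ge_atTop m₁)).and (eventually_ge_atTop m)).exists
  refine ⟨p, ⟨⟨nextF k F p, m'⟩, hZ.image _, ?_⟩, hpk, hpm,
    fun n hn => hm₁ n (le_trans hm'1 hn), hm'2, rfl⟩
  rintro _ ⟨z, hz, rfl⟩
  exact hm' z hz

lemma exists_seq {k : ℕ} (hk : 1 ≤ k) {U : UF} (hUM : U ∈ MM k)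
    (hU : ∀ i i' : ℕ, Tm^[i] U + Tm^[i'] U = Tm^[min i i'] U)
    {A : Set (ℕ → ℤ)} (hA : A ∈ U) :
    ∃ (P : ℕ → ℕ → ℤ) (s : ℕ → State k U A), (∀ n, IsFin k (P n)) ∧
      (∀ n i, i < (s n).1.2 → P n i = 0) ∧ (∀ n i, (s (n + 1)).1.2 ≤ i → P n i = 0) ∧
      (∀ n, (s n).1.2 ≤ (s (n + 1)).1.2) ∧ (s 0).1.1 = {(0, k)} ∧
      ∀ n, (s (n + 1)).1.1 = nextF k (s n).1.1 (P n) := by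
  choose p s' h1 h2 h3 h4 h5 using fun s : State k U A => state_step hUM hU s
  let s0 : State k U A := ⟨⟨{(0, k)}, 0⟩, Set.finite_singleton _, by
    rintro y rfl
    refine ⟨fun n _ => rfl, 0, ?_, fun n _ => rfl, fun n => by simp⟩
    intro j _ h0
    have hj0 : j = 0 := by simp only at h0; omega
    subst hj0
    filter_upwards [hA] with x hx
    simpa using hx⟩
  let s : ℕ → State k U A := fun n => s'^[n] s0
  have hs : ∀ n, s (n + 1) = s' (s n) := fun n => Function.iterate_succ_apply' _ _ _
  refine ⟨fun n => p (s n), s, fun n => h1 _, fun n => h2 _, fun n => ?_, fun n => ?_, rfl,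
    fun n => ?_⟩
  · rw [hs]; exact h3 _
  · rw [hs]; exact h4 _
  · rw [hs]; exact h5 _

lemma main_aux {k : ℕ} (hk : 1 ≤ k) {U : UF} (hUM : U ∈ MM k)
    (hU : ∀ i i' : ℕ, Tm^[i] U + Tm^[i'] U = Tm^[min i i'] U)
    {A : Set (ℕ → ℤ)} (hA : A ∈ U) :
    ∃ P : ℕ → ℕ → ℤ, IsBlockSeq k P ∧ ∀ q : ℕ → ℤ, InSpanPM k P q →
      ∃ q' ∈ A, normLe (q - q') 1 := by
  obtain ⟨P, s, hPk, hlow, hhigh, hmono, hs0, hs⟩ := exists_seq hk hUM hU hA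
  have hm : Monotone fun n => (s n).1.2 := monotone_nat_of_le_succ hmono
  refine ⟨P, ⟨hPk, fun a b hab i i' hi hi' => ?_⟩, ?_⟩
  · have h1 : i < (s (a + 1)).1.2 := by
      by_contra h; exact hi (hhigh a i (not_lt.1 h))
    have h2 : (s b).1.2 ≤ i' := by
      by_contra h; exact hi' (hlow b i' (not_le.1 h))
    have h3 : (s (a + 1)).1.2 ≤ (s b).1.2 := hm (Nat.succ_le_of_lt hab)
    omega
  · rintro q ⟨m, n, ε, j, hn, hε, hj, ⟨i₀, hi₀⟩, rfl⟩
    let E : ℕ → ℤ := Function.extend n ε 1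
    let J : ℕ → ℕ := Function.extend n j (fun _ => k)
    have hEn : ∀ i, E (n i) = ε i := fun i => hn.injective.extend_apply _ _ _
    have hJn : ∀ i, J (n i) = j i := fun i => hn.injective.extend_apply _ _ _
    have hEo : ∀ a, (¬ ∃ i, n i = a) → E a = 1 := fun a ha => by
      simp only [E]; rw [Function.extend_apply' _ _ _ ha]; rfl
    have hJo : ∀ a, (¬ ∃ i, n i = a) → J a = k := fun a ha => by
      simp only [J]; rw [Function.extend_apply' _ _ _ ha]
    have hE : ∀ a, E a ∈ ({1, -1} : Set ℤ) := by
      intro a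
      by_cases h : ∃ i, n i = a
      · obtain ⟨i, rfl⟩ := h
        rw [hEn]; simpa using hε i
      · rw [hEo a h]; simp
    have hJ : ∀ a, J a ≤ k := by
      intro a
      by_cases h : ∃ i, n i = a
      · obtain ⟨i, rfl⟩ := h
        rw [hJn]; exact (hj i).le
      · rw [hJo a h]
    have hpart : ∀ N, ∃ l, (∑ a ∈ Finset.range N, E a • tetris^[J a] (P a), l) ∈ (s N).1.1 ∧
        ((∃ a < N, J a = 0) → l = 0) := by
      intro N
      induction N with
      | zero => exact ⟨k, by rw [hs0]; simp, by simp⟩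
      | succ N ih =>
        obtain ⟨l, hl, hl0⟩ := ih
        refine ⟨min l (J N), ?_, ?_⟩
        · rw [hs, Finset.sum_range_succ]
          exact ⟨((_, l), (E N, J N)), ⟨hl, hE N, hJ N⟩, rfl⟩
        · rintro ⟨a, ha, ha0⟩
          rcases Nat.lt_succ_iff_lt_or_eq.1 ha with h | rfl
          · rw [hl0 ⟨a, h, ha0⟩, Nat.zero_min]
          · rw [ha0, Nat.min_zero]
    obtain ⟨l, hl, hl0⟩ := hpart (n (Fin.last m) + 1)
    have hlt : ∀ i, n i < n (Fin.last m) + 1 := fun i =>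
      Nat.lt_succ_of_le (hn.monotone (Fin.le_last i))
    have hlz : l = 0 := hl0 ⟨n i₀, hlt i₀, by rw [hJn, hi₀]⟩
    subst hlz
    have hsum : ∑ a ∈ Finset.range (n (Fin.last m) + 1), E a • tetris^[J a] (P a) =
        ∑ i, ε i • tetris^[j i] (P (n i)) := by
      symm
      apply Finset.sum_of_injOn n hn.injective.injOn
      · intro i _
        simpa using hlt i
      · intro a _ ha
        have ha' : ¬ ∃ i, n i = a := by simpa using ha
        rw [hJo a ha']
        have := iter_isFin (le_refl k) (hPk a)
        rw [Nat.sub_self] at this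
        rw [isFin_zero this, smul_zero]
      · intro i _
        rw [hEn, hJn]
    rw [hsum] at hl
    obtain ⟨_, q', hq', _, hnear⟩ := (s _).2.2 _ hl
    refine ⟨q', ?_, fun i => by simpa using hnear i⟩
    have h1 := hq' k le_rfl (Nat.zero_min k)
    obtain ⟨x, hx, hxk⟩ := (h1.and hUM.2.1).exists
    have := iter_isFin (le_refl k) hxk
    rw [Nat.sub_self] at this
    rwa [isFin_zero this, add_zero] at hx

end GowersPM

/-- Gowers' `FIN_{±k}` theorem: for every `k, r ≥ 1` and every colouring
`c : FIN_{±k} → r` there are `i < r` and an infinite block sequence `P` with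
`⟨P⟩_{±k} ⊆ (c⁻¹{i})₁`. -/
theorem gowers_fin_pm_k (k r : ℕ) (hk : 1 ≤ k) (hr : 1 ≤ r) (c : (ℕ → ℤ) → Fin r) :
    ∃ (i : Fin r) (P : ℕ → ℕ → ℤ), IsBlockSeq k P ∧
      ∀ q : ℕ → ℤ, InSpanPM k P q →
        ∃ q' : ℕ → ℤ, IsFin k q' ∧ c q' = i ∧ normLe (q - q') 1 := by

  obtain ⟨U, hUM, hU⟩ := GowersPM.exists_gowers_uf hk
  have hcov : (⋃ i : Fin r, {p : ℕ → ℤ | IsFin k p ∧ c p = i}) ∈ U := by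
    filter_upwards [hUM.2.1] with p hp
    exact Set.mem_iUnion.2 ⟨c p, hp, rfl⟩
  obtain ⟨i, hi⟩ : ∃ i : Fin r, {p : ℕ → ℤ | IsFin k p ∧ c p = i} ∈ U := by
    rw [← Set.biUnion_univ, Ultrafilter.finite_biUnion_mem_iff Set.finite_univ] at hcov
    obtain ⟨i, _, hi⟩ := hcov
    exact ⟨i, hi⟩
  obtain ⟨P, hP, h⟩ := GowersPM.main_aux hk hUM hU hi
  refine ⟨i, P, hP, fun q hq => ?_⟩
  obtain ⟨q', ⟨h1, h2⟩, h3⟩ := h q hq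
  exact ⟨q', h1, h2, h3⟩
end

section
/- For every k ∈ ℕ, k ≥ 1, there exists a cofinite ultrafilter 𝒰 on FIN_{±k} such that 𝒰 + (−T)^j 𝒰 = (−T)^j 𝒰 + 𝒰 = 𝒰 for all j ∈ {0, …, k}, and moreover 𝒰 is subsymmetric: for every A ∈ 𝒰, the set −(A)₁ belongs to 𝒰. -/
open Function Set

attribute [local instance] Ultrafilter.add Ultrafilter.addSemigroup

open Filter in
/-- Abstract semigroup argument. -/
lemma gw_abstract {M : Type*} [AddSemigroup M] [TopologicalSpace M] [CompactSpace M] [T2Space M]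
    (hc : ∀ r : M, Continuous (· + r)) (τ : M → M) (hτ : Continuous τ) (F S : Set M)
    (hFτ : ∀ x ∈ F, τ x ∈ F) (hom : ∀ x ∈ F, ∀ y ∈ F, τ (x + y) = τ x + τ y)
    (hF : ∀ x ∈ F, ∀ y ∈ F, x + y ∈ F)
    (hSF : S ⊆ F) (hScl : IsClosed S) (hSne : S.Nonempty)
    (hSS : ∀ x ∈ S, ∀ y ∈ S, x + y ∈ S)
    (hST : ∀ x ∈ S, ∀ y ∈ S, x + τ y ∈ S)
    (hTS : ∀ x ∈ S, ∀ y ∈ S, τ x + y ∈ S)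
    (z : M) (hz : ∀ x : M, x + z = x ∧ z + x = x)
    (k : ℕ) (hk : ∀ x ∈ S, ∀ i, k ≤ i → τ^[i] x = z) :
    ∃ U ∈ S, ∀ i, U + τ^[i] U = U ∧ τ^[i] U + U = U := by
  have hFi : ∀ d, ∀ x ∈ F, τ^[d] x ∈ F := by
    intro d
    induction d with
    | zero => intro x hx; exact hx
    | succ d ih => intro x hx; rw [iterate_succ_apply]; exact ih _ (hFτ _ hx)
  have homi : ∀ d, ∀ x ∈ F, ∀ y ∈ F, τ^[d] (x + y) = τ^[d] x + τ^[d] y := by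
    intro d
    induction d with
    | zero => intro x hx y hy; rfl
    | succ d ih =>
      intro x hx y hy
      rw [iterate_succ_apply, hom x hx y hy, ih _ (hFτ _ hx) _ (hFτ _ hy)]; rfl
  let P : ℕ → Prop := fun d => ∃ U ∈ τ^[d] '' S, ∀ i, U + τ^[i] U = U ∧ τ^[i] U + U = U
  have base : P k := by
    obtain ⟨x, hx⟩ := hSne
    refine ⟨_, ⟨x, hx, rfl⟩, fun i => ?_⟩
    rw [← iterate_add_apply, hk x hx _ le_rfl, hk x hx _ (by omega)]
    exact hz z
  have step : ∀ d, P (d + 1) → P d := by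
    rintro d ⟨U, ⟨X, hX, hXU⟩, hU⟩
    have hXU' : τ^[d] (τ X) = U := by rw [← iterate_succ_apply, hXU]
    have hUF : U ∈ F := hXU ▸ hFi _ _ (hSF hX)
    have hidem : U + U = U := (hU 0).1
    let Y : Set M := τ^[d] '' S ∩ τ ⁻¹' {U}
    have hYF : ∀ V ∈ Y, V ∈ F := by
      rintro V ⟨⟨W, hW, rfl⟩, _⟩
      exact hFi _ _ (hSF hW)
    have hYcl : IsCompact Y := by
      apply IsCompact.inter_right
      · exact hScl.isCompact.image (hτ.iterate d)
      · exact isClosed_singleton.preimage hτ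
    have hYne : Y.Nonempty :=
      ⟨τ^[d] X, ⟨X, hX, rfl⟩, by
        show τ (τ^[d] X) = U
        rw [← iterate_succ_apply' τ, hXU]⟩
    have hYU : ∀ V ∈ Y, V + U ∈ Y := by
      rintro V hV
      have hVF := hYF V hV
      obtain ⟨⟨W, hW, hWV⟩, hVU⟩ := hV
      refine ⟨⟨W + τ X, hST _ hW _ hX, ?_⟩, ?_⟩
      · rw [homi _ _ (hSF hW) _ (hFτ _ (hSF hX)), hWV, hXU']
      · show τ (V + U) = U
        rw [hom _ hVF _ hUF, show τ V = U from hVU]; exact (hU 1).1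
    have hUY : ∀ V ∈ Y, U + V ∈ Y := by
      rintro V hV
      have hVF := hYF V hV
      obtain ⟨⟨W, hW, hWV⟩, hVU⟩ := hV
      refine ⟨⟨τ X + W, hTS _ hX _ hW, ?_⟩, ?_⟩
      · rw [homi _ _ (hFτ _ (hSF hX)) _ (hSF hW), hWV, hXU']
      · show τ (U + V) = U
        rw [hom _ hUF _ hVF, show τ V = U from hVU]; exact (hU 1).2
    have hYY : ∀ V ∈ Y, ∀ V' ∈ Y, V + V' ∈ Y := by
      rintro V hV V' hV'
      have hVF := hYF V hV
      have hVF' := hYF V' hV'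
      obtain ⟨⟨W, hW, hWV⟩, hVU⟩ := hV
      obtain ⟨⟨W', hW', hWV'⟩, hVU'⟩ := hV'
      refine ⟨⟨W + W', hSS _ hW _ hW', ?_⟩, ?_⟩
      · rw [homi _ _ (hSF hW) _ (hSF hW'), hWV, hWV']
      · show τ (V + V') = U
        rw [hom _ hVF _ hVF', show τ V = U from hVU, show τ V' = U from hVU', hidem]
    obtain ⟨W, ⟨V, hV, hVW⟩, hWW⟩ := exists_idempotent_in_compact_add_subsemigroup hc
      ((· + U) '' Y) (hYne.image _) (hYcl.image (hc U)) (by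
        rintro _ ⟨V, hV, rfl⟩ _ ⟨V', hV', rfl⟩
        exact ⟨V + U + V', hYY _ (hYU _ hV) _ hV', by simp only [add_assoc]⟩)
    have hVW : V + U = W := hVW
    have hWY : W ∈ Y := hVW ▸ hYU V hV
    have hWU : W + U = W := by rw [← hVW, add_assoc, hidem]
    have hR := hUY W hWY
    refine ⟨U + W, hR.1, fun i => ?_⟩
    cases i with
    | zero =>
      have : U + W + (U + W) = U + W := by
        rw [add_assoc, ← add_assoc W, hWU, hWW]
      exact ⟨this, this⟩
    | succ i =>
      rw [iterate_succ_apply, show τ (U + W) = U from hR.2]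
      constructor
      · conv_lhs => rw [← hWU]
        rw [add_assoc, add_assoc, (hU i).1, hWU]
      · rw [← add_assoc, (hU i).2]
  have all : ∀ d, P d → P 0 := by
    intro d
    induction d with
    | zero => exact id
    | succ d ih => exact fun h => ih (step d h)
  obtain ⟨U, ⟨X, hX, rfl⟩, hU⟩ := all k base
  exact ⟨X, hX, hU⟩

/-- Finite supports, eventually vanishing on initial segments. -/
def GwF (U : Ultrafilter (ℕ → ℤ)) : Prop :=
  {p : ℕ → ℤ | ∃ m, ∀ n, m ≤ n → p n = 0} ∈ U ∧ ∀ m : ℕ, {p : ℕ → ℤ | ∀ n < m, p n = 0} ∈ U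

/-- Relative subsymmetry. -/
def GwR (U V : Ultrafilter (ℕ → ℤ)) : Prop :=
  ∀ A ∈ V, {p : ℕ → ℤ | -p ∈ approx 1 A} ∈ U

lemma gw_fin (p : ℕ → ℤ) : (Function.support p).Finite ↔ ∃ m, ∀ n, m ≤ n → p n = 0 := by
  constructor
  · intro h
    obtain ⟨m, hm⟩ := h.bddAbove
    refine ⟨m + 1, fun n hn => ?_⟩
    by_contra hne
    have := hm (show n ∈ Function.support p from hne)
    omega
  · rintro ⟨m, hm⟩
    refine (Set.finite_lt_nat m).subset fun n hn => ?_
    by_contra hlt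
    exact hn (hm n (not_lt.mp hlt))

lemma gw_cof_F {k U} (h : IsCofiniteUF k U) : GwF U := by
  refine ⟨?_, h.2⟩
  have h1 := h.1
  filter_upwards [h1] with p hp
  exact (gw_fin p).1 hp.1

lemma gw_mem_add (U V : Ultrafilter (ℕ → ℤ)) (A : Set (ℕ → ℤ)) :
    A ∈ U + V ↔ {p | {q | p + q ∈ A} ∈ V} ∈ U := Iff.rfl

lemma gw_zero (U : Ultrafilter (ℕ → ℤ)) : U + pure 0 = U ∧ pure 0 + U = U := by
  constructor
  · ext A
    rw [gw_mem_add]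
    simp [Ultrafilter.mem_pure]
  · ext A
    rw [gw_mem_add]
    simp [Ultrafilter.mem_pure]

lemma gw_sumMem {U V : Ultrafilter (ℕ → ℤ)} (hU : GwF U) (hV : GwF V) (A : Set (ℕ → ℤ)) :
    SumMem U V A ↔ A ∈ U + V := by
  rw [gw_mem_add]
  unfold SumMem
  constructor
  · intro h
    filter_upwards [h] with p hp
    have hp : _ ∈ V := hp
    show _ ∈ V
    filter_upwards [hp] with q hq
    exact hq.2
  · intro h
    filter_upwards [h, hU.1] with p hp ⟨m, hm⟩
    have hp : _ ∈ V := hp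
    show _ ∈ V
    filter_upwards [hp, hV.2 m] with q hq hq'
    refine ⟨fun a b ha hb => ?_, hq⟩
    have h1 : a < m := by by_contra h; exact ha (hm a (not_lt.mp h))
    have h2 : m ≤ b := by by_contra h; exact hb (hq' b (not_le.mp h))
    omega

/-- A convenient way to establish membership in a sum. -/
lemma gw_mem_add_of {U V : Ultrafilter (ℕ → ℤ)} (hU : GwF U) (hV : GwF V)
    {P Q A : Set (ℕ → ℤ)} (hP : P ∈ U) (hQ : Q ∈ V)
    (h : ∀ p ∈ P, ∀ q ∈ Q, ∀ m, (∀ n, m ≤ n → p n = 0) → (∀ n < m, q n = 0) → p + q ∈ A) :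
    A ∈ U + V := by
  rw [gw_mem_add]
  filter_upwards [hP, hU.1] with p hp ⟨m, hm⟩
  show _ ∈ V
  filter_upwards [hQ, hV.2 m] with q hq hq'
  exact h p hp q hq m hm hq'

lemma gw_F_add {U V} (hU : GwF U) (hV : GwF V) : GwF (U + V) := by
  constructor
  · refine gw_mem_add_of hU hV hU.1 hV.1 ?_
    rintro p ⟨a, ha⟩ q ⟨b, hb⟩ m _ _
    refine ⟨max a b, fun n hn => ?_⟩
    simp [ha n (le_trans (le_max_left _ _) hn), hb n (le_trans (le_max_right _ _) hn)]
  · intro m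
    refine gw_mem_add_of hU hV (hU.2 m) (hV.2 m) ?_
    intro p hp q hq _ _ _ n hn
    simp [hp n hn, hq n hn]

lemma gw_cof_add {i j U V} (hU : IsCofiniteUF i U) (hV : IsCofiniteUF j V) :
    IsCofiniteUF (max i j) (U + V) := by
  have hUF := gw_cof_F hU
  have hVF := gw_cof_F hV
  have hF := gw_F_add hUF hVF
  refine ⟨?_, hF.2⟩
  have : {p : ℕ → ℤ | (∀ n, |p n| ≤ ((max i j : ℕ) : ℤ)) ∧ ∃ n, |p n| = ((max i j : ℕ) : ℤ)}
      ∈ U + V := by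
    refine gw_mem_add_of hUF hVF hU.1 hV.1 ?_
    rintro p ⟨_, hp, a, ha⟩ q ⟨_, hq, b, hb⟩ m hm hm'
    constructor
    · intro n
      rcases lt_or_ge n m with h | h
      · have := hp n
        simp only [Pi.add_apply, hm' n h, add_zero]
        push_cast
        exact le_trans this (le_max_left _ _)
      · have := hq n
        simp only [Pi.add_apply, hm n h, zero_add]
        push_cast
        exact le_trans this (le_max_right _ _)
    · rcases le_total i j with hij | hij
      · rw [max_eq_right hij]
        rcases lt_or_ge b m with h | h
        · have h0 := hm' b h
          have : (j : ℤ) = 0 := by rw [← hb, h0]; rfl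
          refine ⟨a, ?_⟩
          have hi : (i : ℤ) = 0 := by omega
          have hpa : p a = 0 := by rw [← abs_eq_zero, ha, hi]
          have hqa : q a = 0 := by
            have := hq a
            rw [← abs_eq_zero]
            have := abs_nonneg (q a)
            omega
          simp [hpa, hqa, this]
        · exact ⟨b, by simp [hm b h, hb]⟩
      · rw [max_eq_left hij]
        rcases lt_or_ge a m with h | h
        · exact ⟨a, by simp [hm' a h, ha]⟩
        · have h0 := hm a h
          have : (i : ℤ) = 0 := by rw [← ha, h0]; rfl
          refine ⟨b, ?_⟩
          have hi : (j : ℤ) = 0 := by omega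
          have hpa : q b = 0 := by rw [← abs_eq_zero, hb, hi]
          have hqa : p b = 0 := by
            have := hp b
            rw [← abs_eq_zero]
            have := abs_nonneg (p b)
            omega
          simp [hpa, hqa, this]
  have h1 := hF.1
  filter_upwards [this, h1] with p hp hp'
  exact ⟨(gw_fin p).2 hp', hp⟩

lemma gw_negT_zero {p : ℕ → ℤ} {n : ℕ} (h : p n = 0) : negT p n = 0 := by
  simp [negT, tetris, h]

lemma gw_negT_abs (p : ℕ → ℤ) (n : ℕ) : |negT p n| = max (|p n| - 1) 0 := by
  simp only [negT, tetris, Pi.neg_apply, abs_neg]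
  split_ifs with h1 h2 <;> grind

lemma gw_F_map {U} (hU : GwF U) : GwF (U.map negT) := by
  constructor
  · rw [Ultrafilter.mem_map]
    filter_upwards [hU.1] with p ⟨m, hm⟩
    exact ⟨m, fun n hn => gw_negT_zero (hm n hn)⟩
  · intro m
    rw [Ultrafilter.mem_map]
    filter_upwards [hU.2 m] with p hp n hn
    exact gw_negT_zero (hp n hn)

lemma gw_cof_map {k U} (hU : IsCofiniteUF k U) : IsCofiniteUF (k - 1) (U.map negT) := by
  have hF := gw_F_map (gw_cof_F hU)
  refine ⟨?_, hF.2⟩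
  have h1 := hF.1
  rw [Ultrafilter.mem_map] at h1 ⊢
  have h2 := hU.1
  filter_upwards [h1, h2] with p hp hp'
  obtain ⟨_, hb, a, ha⟩ := hp'
  refine ⟨(gw_fin _).2 hp, fun n => ?_, a, ?_⟩
  · rw [gw_negT_abs]; have := hb n; omega
  · rw [gw_negT_abs]; omega

lemma gw_map_add {U V} (hU : GwF U) (hV : GwF V) :
    (U + V).map negT = U.map negT + V.map negT := by
  have key : ∀ A, A ∈ (U + V).map negT → A ∈ U.map negT + V.map negT := by
    intro A hA
    rw [Ultrafilter.mem_map, gw_mem_add] at hA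
    rw [gw_mem_add, Ultrafilter.mem_map]
    filter_upwards [hA, hU.1] with p hp ⟨m, hm⟩
    have hp : _ ∈ V := hp
    show _ ∈ V.map negT
    rw [Ultrafilter.mem_map]
    filter_upwards [hp, hV.2 m] with q hq hq'
    have : negT p + negT q = negT (p + q) := by
      funext n
      rcases lt_or_ge n m with h | h
      · simp [negT, tetris, hq' n h]
      · simp [negT, tetris, hm n h]
    show negT p + negT q ∈ A
    rw [this]; exact hq
  exact (Ultrafilter.eq_of_le (fun A hA => key A hA)).symm

lemma gw_R_add {U U' V V'} (hU : GwF U) (hU' : GwF U') (hV : GwF V) (hV' : GwF V')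
    (h : GwR U V) (h' : GwR U' V') : GwR (U + U') (V + V') := by
  intro A hA
  rw [gw_mem_add] at hA ⊢
  have h1 := h _ (Filter.inter_mem hA hV.1)
  filter_upwards [h1, hU.1] with p ⟨q, ⟨hq, b, hb⟩, hpq⟩ ⟨a, ha⟩
  have hq : _ ∈ V' := hq
  have h2 := h' _ (Filter.inter_mem hq (hV'.2 (max a b)))
  show _ ∈ U'
  filter_upwards [h2, hU'.2 (max a b)] with p' ⟨q', ⟨hq', hb'⟩, hpq'⟩ ha'
  refine ⟨q + q', hq', fun n => ?_⟩
  rcases lt_or_ge n (max a b) with hn | hn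
  · have := hpq n
    have e1 := hb' n hn
    have e2 := ha' n hn
    simp only [Pi.sub_apply, Pi.neg_apply, Pi.add_apply] at this ⊢
    simpa [e1, e2] using this
  · have := hpq' n
    have e1 := ha n (le_trans (le_max_left _ _) hn)
    have e2 := hb n (le_trans (le_max_right _ _) hn)
    simp only [Pi.sub_apply, Pi.neg_apply, Pi.add_apply] at this ⊢
    simpa [e1, e2] using this

lemma gw_R_map {U} (h : GwR U U) : GwR (U.map negT) (U.map negT) := by
  intro A hA
  rw [Ultrafilter.mem_map] at hA ⊢
  have h1 := h _ hA
  filter_upwards [h1] with p ⟨q, hq, hpq⟩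
  refine ⟨negT q, hq, fun n => ?_⟩
  have := hpq n
  simp only [Pi.sub_apply, Pi.neg_apply, negT, tetris] at this ⊢
  rw [abs_le] at this ⊢
  push_cast at this ⊢
  constructor <;> split_ifs <;> omega

/-! Existence of a subsymmetric ultrafilter. -/

/-- Spread of a single coefficient. -/
noncomputable def gwE (c : ℤ) : Ultrafilter (ℕ → ℤ) :=
  (Filter.hyperfilter ℕ).map (fun n => Pi.single n c)

lemma gwE_zero : gwE 0 = pure 0 := by
  ext A
  rw [gwE, Ultrafilter.mem_map, Ultrafilter.mem_pure]
  by_cases h : (0 : ℕ → ℤ) ∈ A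
  · simp only [Pi.single_zero, Set.preimage, h, Set.ofPred_true, iff_true]
    exact Filter.univ_mem
  · simp [h, Set.preimage]

lemma gwE_cof (c : ℤ) : IsCofiniteUF c.natAbs (gwE c) := by
  constructor
  · rw [gwE, Ultrafilter.mem_map]
    apply Filter.mem_of_superset Filter.univ_mem
    intro n _
    refine ⟨(gw_fin _).2 ⟨n + 1, fun i hi => ?_⟩, fun i => ?_, n, ?_⟩
    · exact Pi.single_eq_of_ne (by omega) _
    · by_cases h : i = n
      · subst h; simp
      · beta_reduce; rw [Pi.single_eq_of_ne h]; simp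
    · simp
  · intro m
    rw [gwE, Ultrafilter.mem_map]
    refine Filter.mem_hyperfilter_of_finite_compl ((Set.finite_lt_nat m).subset ?_)
    intro n hn
    by_contra h
    apply hn
    intro i hi
    have h : ¬ n < m := h
    exact Pi.single_eq_of_ne (by omega) _

lemma gwE_R (a b : ℤ) (h : |a + b| ≤ 1) : GwR (gwE a) (gwE b) := by
  intro A hA
  rw [gwE, Ultrafilter.mem_map] at hA ⊢
  filter_upwards [hA] with n hn
  refine ⟨_, hn, fun i => ?_⟩
  by_cases hi : i = n
  · subst hi
    simp only [Pi.sub_apply, Pi.neg_apply, Pi.single_eq_same]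
    rw [← abs_neg]
    simpa [add_comm] using h
  · simp [Pi.single_eq_of_ne hi]

/-- Iterated sum. -/
noncomputable def gwS (c : ℕ → ℤ) : ℕ → Ultrafilter (ℕ → ℤ)
  | 0 => pure 0
  | n + 1 => gwS c n + gwE (c n)

lemma gwS_cof (c : ℕ → ℤ) (n : ℕ) :
    IsCofiniteUF ((Finset.range n).sup fun i => (c i).natAbs) (gwS c n) := by
  induction n with
  | zero =>
    have := gwE_cof 0
    rw [gwE_zero] at this
    simpa [gwS] using this
  | succ n ih =>
    have := gw_cof_add ih (gwE_cof (c n))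
    rw [Finset.range_add_one, Finset.sup_insert, sup_comm]
    exact this

lemma gwS_shift (c : ℕ → ℤ) (n : ℕ) : gwS c (n + 1) = gwE (c 0) + gwS (fun i => c (i + 1)) n := by
  induction n with
  | zero => simp only [gwS, (gw_zero _).1, (gw_zero _).2]
  | succ n ih => rw [gwS, ih, add_assoc]; rfl

lemma gwS_R (a b : ℕ → ℤ) (h : ∀ i, |a i + b i| ≤ 1) (n : ℕ) : GwR (gwS a n) (gwS b n) := by
  induction n with
  | zero =>
    have := gwE_R 0 0 (by simp)
    rw [gwE_zero] at this
    exact this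
  | succ n ih =>
    exact gw_R_add (gw_cof_F (gwS_cof _ _)) (gw_cof_F (gwE_cof _)) (gw_cof_F (gwS_cof _ _))
      (gw_cof_F (gwE_cof _)) ih (gwE_R _ _ (h n))

lemma gw_exists (k : ℕ) (hk : 1 ≤ k) : ∃ U, IsCofiniteUF k U ∧ GwR U U := by
  let c : ℕ → ℤ := fun i => (-1) ^ i * min (i : ℤ) (2 * k - i)
  have hc : ∀ i, |c (i + 1) + c i| ≤ 1 := by
    intro i
    have : c (i + 1) + c i =
        (-1) ^ i * (min (i : ℤ) (2 * k - i) - min ((i + 1 : ℕ) : ℤ) (2 * k - (i + 1 : ℕ))) := by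
      simp only [c]; rw [pow_succ]; ring
    rw [this, abs_mul, abs_pow, abs_neg, abs_one, one_pow, one_mul, abs_le]
    push_cast
    constructor <;> omega
  have hcabs : ∀ i, |c i| = |min (i : ℤ) (2 * k - i)| := by
    intro i
    simp only [c]
    rw [abs_mul, abs_pow, abs_neg, abs_one, one_pow, one_mul]
  let a : ℕ → ℤ := fun i => c (i + 1)
  obtain ⟨n, hn⟩ : ∃ n, n + 1 = 2 * k := ⟨2 * k - 1, by omega⟩
  have hc0 : c 0 = 0 := by simp [c]
  have han : a n = 0 := by
    rw [← abs_eq_zero]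
    simp only [a]
    rw [hcabs, abs_eq_zero]
    omega
  have h1 : gwS c (n + 1) = gwS a n := by rw [gwS_shift, hc0, gwE_zero, (gw_zero _).2]
  have h2 : gwS a (n + 1) = gwS a n := by rw [gwS, han, gwE_zero, (gw_zero _).1]
  have hR := gwS_R a c hc (n + 1)
  rw [h1, h2] at hR
  refine ⟨gwS a n, ?_, hR⟩
  have hC := gwS_cof a n
  have : ((Finset.range n).sup fun i => (a i).natAbs) = k := by
    apply le_antisymm
    · apply Finset.sup_le
      intro i hi
      rw [Finset.mem_range] at hi
      have := hcabs (i + 1)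
      simp only [a]
      zify
      rw [this, abs_le]
      push_cast
      constructor <;> omega
    · have hm : k - 1 ∈ Finset.range n := by rw [Finset.mem_range]; omega
      refine le_trans ?_ (Finset.le_sup (f := fun i => (a i).natAbs) hm)
      have := hcabs (k - 1 + 1)
      simp only [a]
      zify
      rw [this, Nat.sub_add_cancel hk]
      refine le_trans ?_ (le_abs_self _)
      omega
  rwa [this] at hC

lemma gw_map_continuous (f : (ℕ → ℤ) → (ℕ → ℤ)) : Continuous (Ultrafilter.map f) :=
  ultrafilterBasis_is_basis.continuous_iff.2 <| Set.forall_mem_range.mpr fun s ↦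
    ultrafilter_isOpen_basic (f ⁻¹' s)

lemma gw_map_iterate (f : (ℕ → ℤ) → (ℕ → ℤ)) (i : ℕ) (U : Ultrafilter (ℕ → ℤ)) :
    (Ultrafilter.map f)^[i] U = Ultrafilter.map (f^[i]) U := by
  induction i generalizing U with
  | zero => exact (Ultrafilter.map_id U).symm
  | succ i ih => rw [iterate_succ_apply, ih, Ultrafilter.map_map]; rfl

lemma gw_cof_zero {U} (h : IsCofiniteUF 0 U) : U = pure 0 := by
  have h1 : ({0} : Set (ℕ → ℤ)) ∈ U := by
    have := h.1
    filter_upwards [this] with p hp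
    funext n
    have := hp.2.1 n
    simpa using this
  refine Ultrafilter.eq_of_le ?_
  intro A hA
  have hA : (0 : ℕ → ℤ) ∈ A := hA
  exact Filter.mem_of_superset h1 (by simpa using hA)

lemma gw_cof_iterate {k U} (hU : IsCofiniteUF k U) (i : ℕ) :
    IsCofiniteUF (k - i) ((Ultrafilter.map negT)^[i] U) := by
  induction i with
  | zero => exact hU
  | succ i ih => rw [iterate_succ_apply']; exact gw_cof_map ih

lemma gw_closed (k : ℕ) : IsClosed {U | IsCofiniteUF k U ∧ GwR U U} := by
  apply IsClosed.inter
  · apply IsClosed.inter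
    · exact ultrafilter_isClosed_basic _
    · have : {U : Ultrafilter (ℕ → ℤ) | ∀ m : ℕ, {p : ℕ → ℤ | ∀ n < m, p n = 0} ∈ U} =
          ⋂ m : ℕ, {U | {p : ℕ → ℤ | ∀ n < m, p n = 0} ∈ U} := by ext; simp
      show IsClosed {U : Ultrafilter (ℕ → ℤ) | ∀ m : ℕ, {p : ℕ → ℤ | ∀ n < m, p n = 0} ∈ U}
      rw [this]
      exact isClosed_iInter fun m => ultrafilter_isClosed_basic _
  · have : {U : Ultrafilter (ℕ → ℤ) | GwR U U} =
        ⋂ A : Set (ℕ → ℤ), ({U | A ∈ U}ᶜ ∪ {U | {p : ℕ → ℤ | -p ∈ approx 1 A} ∈ U}) := by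
      ext U
      simp only [GwR, Set.mem_ofPred_eq, Set.mem_iInter, Set.mem_union, Set.mem_compl_iff,
        imp_iff_not_or]
    show IsClosed {U : Ultrafilter (ℕ → ℤ) | GwR U U}
    rw [this]
    exact isClosed_iInter fun A =>
      (ultrafilter_isOpen_basic A).isClosed_compl.union (ultrafilter_isClosed_basic _)

/-- there is a cofinite ultrafilter `𝒰` on `FIN_{±k}` with
`𝒰 + (−T)^j 𝒰 = (−T)^j 𝒰 + 𝒰 = 𝒰` for all `j ≤ k`, which moreover is subsymmetric. -/
theorem exists_gowers_ultrafilter (k : ℕ) (hk : 1 ≤ k) :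
    ∃ 𝒰 : Ultrafilter (ℕ → ℤ), IsCofiniteUF k 𝒰 ∧
      (∀ j ≤ k, ∀ A : Set (ℕ → ℤ),
        (SumMem 𝒰 (Ultrafilter.map (negT^[j]) 𝒰) A ↔ A ∈ 𝒰) ∧
        (SumMem (Ultrafilter.map (negT^[j]) 𝒰) 𝒰 A ↔ A ∈ 𝒰)) ∧
      IsSubsymmetric 𝒰 := by
  obtain ⟨U, ⟨hUc, hUs⟩, hU⟩ := gw_abstract (M := Ultrafilter (ℕ → ℤ))
    Ultrafilter.continuous_add_left (Ultrafilter.map negT) (gw_map_continuous negT)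
    {U | GwF U} {U | IsCofiniteUF k U ∧ GwR U U}
    (fun x hx => gw_F_map hx) (fun x hx y hy => gw_map_add hx hy)
    (fun x hx y hy => gw_F_add hx hy) (fun x hx => gw_cof_F hx.1) (gw_closed k) (gw_exists k hk)
    (by
      rintro x ⟨hx, hx'⟩ y ⟨hy, hy'⟩
      refine ⟨?_, gw_R_add (gw_cof_F hx) (gw_cof_F hy) (gw_cof_F hx) (gw_cof_F hy) hx' hy'⟩
      simpa using gw_cof_add hx hy)
    (by
      rintro x ⟨hx, hx'⟩ y ⟨hy, hy'⟩
      have hm := gw_F_map (gw_cof_F hy)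
      refine ⟨?_, gw_R_add (gw_cof_F hx) hm (gw_cof_F hx) hm hx' (gw_R_map hy')⟩
      simpa using gw_cof_add hx (gw_cof_map hy))
    (by
      rintro x ⟨hx, hx'⟩ y ⟨hy, hy'⟩
      have hm := gw_F_map (gw_cof_F hx)
      refine ⟨?_, gw_R_add hm (gw_cof_F hy) hm (gw_cof_F hy) (gw_R_map hx') hy'⟩
      simpa using gw_cof_add (gw_cof_map hx) hy)
    (pure 0) gw_zero k
    (by
      rintro x ⟨hx, _⟩ i hi
      apply gw_cof_zero
      have := gw_cof_iterate hx i
      rwa [Nat.sub_eq_zero_of_le hi] at this)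
  refine ⟨U, hUc, fun j _ A => ?_, hUs⟩
  have hF := gw_cof_F hUc
  have hFj := gw_cof_F (gw_cof_iterate hUc j)
  have h := hU j
  rw [gw_map_iterate] at hFj h
  rw [gw_sumMem hF hFj, gw_sumMem hFj hF, h.1, h.2]
  exact ⟨Iff.rfl, Iff.rfl⟩
end

section
/- Let 𝒰 be a cofinite ultrafilter on FIN_{±k} satisfying 𝒰 + (−T)^j 𝒰 = (−T)^j 𝒰 + 𝒰 = 𝒰 for all j ∈ {0, …, k}. Then for every A ∈ 𝒰, the set of f ∈ FIN_{±k} such that {g ∈ FIN_{±k} : f < g and {f, g} ∪ {f + (−T)^j(g), (−T)^j(f) + g : j < k} ⊆ A} ∈ 𝒰 itself belongs to 𝒰. -/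
open Function Set

/-- if `𝒰` is a cofinite ultrafilter on `FIN_{±k}` with
`𝒰 + (−T)^j 𝒰 = (−T)^j 𝒰 + 𝒰 = 𝒰` for all `j ≤ k`, then for every `A ∈ 𝒰`,
`𝒰`-many `f` satisfy that `𝒰`-many `g > f` have
`{f, g} ∪ {f + (−T)^j g, (−T)^j f + g : j < k} ⊆ A`. -/
theorem gowers_ultrafilter_combinatorics (k : ℕ) (hk : 1 ≤ k) (𝒰 : Ultrafilter (ℕ → ℤ))
    (hcof : IsCofiniteUF k 𝒰)
    (hidem : ∀ j ≤ k, ∀ A : Set (ℕ → ℤ),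
      (SumMem 𝒰 (Ultrafilter.map (negT^[j]) 𝒰) A ↔ A ∈ 𝒰) ∧
      (SumMem (Ultrafilter.map (negT^[j]) 𝒰) 𝒰 A ↔ A ∈ 𝒰))
    (A : Set (ℕ → ℤ)) (hA : A ∈ 𝒰) :
    {f | {g | BlockLt f g ∧ f ∈ A ∧ g ∈ A ∧
      ∀ j < k, f + negT^[j] g ∈ A ∧ negT^[j] f + g ∈ A} ∈ 𝒰} ∈ 𝒰 := by
  have h1 : ∀ᶠ f in (𝒰 : Filter (ℕ → ℤ)), ∀ j ∈ Set.Iio k,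
      (∀ᶠ g in (𝒰 : Filter (ℕ → ℤ)), BlockLt f (negT^[j] g) ∧ f + negT^[j] g ∈ A) ∧
      (∀ᶠ g in (𝒰 : Filter (ℕ → ℤ)), BlockLt (negT^[j] f) g ∧ negT^[j] f + g ∈ A) := by
    rw [Filter.eventually_all_finite (Set.finite_Iio k)]
    intro j hj
    have hj' : j ≤ k := le_of_lt hj
    have ha := ((hidem j hj' A).1).2 hA
    have hb := ((hidem j hj' A).2).2 hA
    exact Filter.Eventually.and ha hb
  have hA' : ∀ᶠ f in (𝒰 : Filter (ℕ → ℤ)), f ∈ A := hA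
  have goal : ∀ᶠ f in (𝒰 : Filter (ℕ → ℤ)), ∀ᶠ g in (𝒰 : Filter (ℕ → ℤ)),
      BlockLt f g ∧ f ∈ A ∧ g ∈ A ∧
      ∀ j < k, f + negT^[j] g ∈ A ∧ negT^[j] f + g ∈ A := by
    filter_upwards [h1, hA'] with f hf hfA
    have h2 : ∀ᶠ g in (𝒰 : Filter (ℕ → ℤ)), ∀ j ∈ Set.Iio k,
        (BlockLt f (negT^[j] g) ∧ f + negT^[j] g ∈ A) ∧
        (BlockLt (negT^[j] f) g ∧ negT^[j] f + g ∈ A) := by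
      rw [Filter.eventually_all_finite (Set.finite_Iio k)]
      intro j hj
      exact (hf j hj).1.and (hf j hj).2
    filter_upwards [h2, hA'] with g hg hgA
    exact ⟨(hg 0 hk).1.1, hfA, hgA, fun j hj => ⟨(hg j hj).1.2, (hg j hj).2.2⟩⟩
  exact goal
end
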